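/- Let m ≥ 1 and q = 2^m. For each of the codes M_q^⊥, M_q, K_q and K_q^⊥, every zero-fixing automorphism is semilinear, and the groups Aut0(M_q^⊥), Aut0(M_q), Aut0(K_q) and Aut0(K_q^⊥) are pairwise isomorphic, each of order m·(q²−1)·(q²−q) (the order of the general semilinear group ΓL(2,q)). Moreover, the monomial automorphism groups AutM(M_q^⊥) and AutM(M_q) each have order (q²−1)·(q²−q) (the order of GL(2,q)). -/

import Mathlib

open Finset

/-- The dual of a code (as a set of words) with respect to the standard inner product. -/
def dualSet {F : Type*} [CommRing F] {ι : Type*} [Fintype ι] (C : Set (ι → F)) :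
    Set (ι → F) :=
  {y | ∀ x ∈ C, ∑ i, x i * y i = 0}

/-- Zero-fixing automorphisms of a code. -/
def aut0Set {F : Type*} [Zero F] {ι : Type*} (C : Set (ι → F)) :
    Set (Equiv.Perm (ι → F)) :=
  {e | (∃ (π : Equiv.Perm ι) (σ : ι → Equiv.Perm F), (∀ i, σ i 0 = 0) ∧
        ∀ v i, e v i = σ i (v (π⁻¹ i))) ∧ ⇑e '' C = C}

/-- Monomial automorphisms of a code. -/
def autMSet {F : Type*} [MonoidWithZero F] {ι : Type*} (C : Set (ι → F)) :
    Set (Equiv.Perm (ι → F)) :=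
  {e | (∃ (π : Equiv.Perm ι) (c : ι → F), (∀ i, c i ≠ 0) ∧
        ∀ v i, e v i = c i * v (π⁻¹ i)) ∧ ⇑e '' C = C}

/-- Semilinear automorphisms of a code over a field `F`. -/
def autSSet {F : Type*} [Field F] {ι : Type*} (C : Set (ι → F)) :
    Set (Equiv.Perm (ι → F)) :=
  {e | (∃ (π : Equiv.Perm ι) (τ : F ≃+* F) (c : ι → F), (∀ i, c i ≠ 0) ∧
        ∀ v i, e v i = c i * τ (v (π⁻¹ i))) ∧ ⇑e '' C = C}

/-- Two subsets of (possibly different) groups are isomorphic as groups: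
there is a bijection between them preserving multiplication. -/
def MulBijOn {X Y : Type*} [Mul X] [Mul Y] (A : Set X) (B : Set Y) : Prop :=
  ∃ f : X → Y, Set.BijOn f A B ∧ ∀ a ∈ A, ∀ b ∈ A, f (a * b) = f a * f b

set_option linter.unusedSectionVars false

section NormForm

variable {F K : Type*} [Field F] [Field K] [Fintype F] [Fintype K] [Algebra F K]

/-- The polar form of the norm of a quadratic extension of finite fields. -/
noncomputable def normPolar (x y : K) : F :=
  Algebra.trace F K (x * FiniteField.frobeniusAlgHom F K y)

theorem finrank_of_card_eq_sq (h : Fintype.card K = Fintype.card F ^ 2) :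
    Module.finrank F K = 2 := by
  rw [Module.card_eq_pow_finrank (K := F) (V := K)] at h
  exact Nat.pow_right_injective Fintype.one_lt_card h

theorem frobenius_frobenius (h : Fintype.card K = Fintype.card F ^ 2) (x : K) :
    FiniteField.frobeniusAlgHom F K (FiniteField.frobeniusAlgHom F K x) = x := by
  simp only [FiniteField.coe_frobeniusAlgHom]
  rw [← pow_mul, ← sq, ← h, FiniteField.pow_card]

theorem algebraMap_trace_quadratic (h : Fintype.card K = Fintype.card F ^ 2) (x : K) :
    algebraMap F K (Algebra.trace F K x) = x + FiniteField.frobeniusAlgHom F K x := by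
  rw [FiniteField.algebraMap_trace_eq_sum_pow, finrank_of_card_eq_sq h]
  simp [Finset.sum_range_succ]

theorem algebraMap_norm_quadratic (h : Fintype.card K = Fintype.card F ^ 2) (x : K) :
    algebraMap F K (Algebra.norm F x) = x * FiniteField.frobeniusAlgHom F K x := by
  rw [FiniteField.algebraMap_norm_eq_prod_pow, finrank_of_card_eq_sq h]
  simp [Finset.prod_range_succ]

theorem algebraMap_normPolar (h : Fintype.card K = Fintype.card F ^ 2) (x y : K) :
    algebraMap F K (normPolar x y) =
      x * FiniteField.frobeniusAlgHom F K y + FiniteField.frobeniusAlgHom F K x * y := by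
  rw [normPolar, algebraMap_trace_quadratic h, map_mul, frobenius_frobenius h]

theorem norm_add_quadratic (h : Fintype.card K = Fintype.card F ^ 2) (x y : K) :
    Algebra.norm F (x + y) = Algebra.norm F x + Algebra.norm F y + normPolar x y := by
  apply (algebraMap F K).injective
  simp only [map_add, algebraMap_norm_quadratic h, algebraMap_normPolar h]
  ring

theorem norm_smul_quadratic (h : Fintype.card K = Fintype.card F ^ 2) (r : F) (x : K) :
    Algebra.norm F (r • x) = r ^ 2 * Algebra.norm F x := by
  rw [Algebra.smul_def, map_mul, Algebra.norm_algebraMap, finrank_of_card_eq_sq h]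

theorem normPolar_add_left (x y z : K) :
    normPolar (F := F) (x + y) z = normPolar x z + normPolar y z := by
  simp [normPolar, add_mul]

theorem normPolar_add_right (x y z : K) :
    normPolar (F := F) x (y + z) = normPolar x y + normPolar x z := by
  simp only [normPolar, map_add, mul_add]

theorem normPolar_smul_left (r : F) (x y : K) :
    normPolar (r • x) y = r * normPolar x y := by
  simp [normPolar]

theorem normPolar_smul_right (r : F) (x y : K) :
    normPolar x (r • y) = r * normPolar x y := by
  rw [normPolar, normPolar, map_smul, mul_smul_comm, map_smul, smul_eq_mul]

theorem normPolar_comm (h : Fintype.card K = Fintype.card F ^ 2) (x y : K) :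
    normPolar (F := F) x y = normPolar y x := by
  apply (algebraMap F K).injective
  rw [algebraMap_normPolar h, algebraMap_normPolar h]
  ring

theorem exists_normPolar_eq {x : K} (hx : x ≠ 0) (b : F)
    (h : Fintype.card K = Fintype.card F ^ 2) : ∃ y : K, normPolar x y = b := by
  obtain ⟨t, rfl⟩ := Algebra.trace_surjective F K b
  refine ⟨FiniteField.frobeniusAlgHom F K (t / x), ?_⟩
  rw [normPolar, frobenius_frobenius h, mul_div_cancel₀ _ hx]

theorem exists_algebraMap_of_frobenius_eq {t : K}
    (ht : FiniteField.frobeniusAlgHom F K t = t) : ∃ r : F, algebraMap F K r = t := by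
  classical
  by_contra! hne
  have hp : (Polynomial.X ^ Fintype.card F - Polynomial.X : Polynomial K) ≠ 0 :=
    FiniteField.X_pow_card_sub_X_ne_zero K Fintype.one_lt_card
  have hdeg : (Polynomial.X ^ Fintype.card F - Polynomial.X : Polynomial K).natDegree =
      Fintype.card F := FiniteField.X_pow_card_sub_X_natDegree_eq K Fintype.one_lt_card
  have hsub : insert t (Finset.univ.image (algebraMap F K)) ⊆
      (Polynomial.X ^ Fintype.card F - Polynomial.X : Polynomial K).roots.toFinset := by
    intro s hs
    rw [Multiset.mem_toFinset, Polynomial.mem_roots hp, Polynomial.IsRoot, Polynomial.eval_sub,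
      Polynomial.eval_pow, Polynomial.eval_X, sub_eq_zero]
    rcases Finset.mem_insert.mp hs with rfl | hs
    · simpa [FiniteField.coe_frobeniusAlgHom] using ht
    · obtain ⟨r, -, rfl⟩ := Finset.mem_image.mp hs
      rw [← map_pow, FiniteField.pow_card]
  have hcard := (Finset.card_le_card hsub).trans
    ((Multiset.toFinset_card_le _).trans (Polynomial.card_roots' _))
  rw [Finset.card_insert_of_notMem (by simpa using hne),
    Finset.card_image_of_injective _ (algebraMap F K).injective, Finset.card_univ, hdeg] at hcard
  omega

variable [CharP F 2]

theorem normPolar_self (h : Fintype.card K = Fintype.card F ^ 2) (x : K) :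
    normPolar (F := F) x x = 0 := by
  have : CharP K 2 := charP_of_injective_algebraMap (algebraMap F K).injective 2
  apply (algebraMap F K).injective
  rw [algebraMap_normPolar h, mul_comm, map_zero, CharTwo.add_self_eq_zero]

theorem exists_smul_of_normPolar_eq_zero (h : Fintype.card K = Fintype.card F ^ 2) {x y : K}
    (hx : x ≠ 0) (hxy : normPolar (F := F) x y = 0) : ∃ r : F, y = r • x := by
  have : CharP K 2 := charP_of_injective_algebraMap (algebraMap F K).injective 2
  have h0 := algebraMap_normPolar (F := F) h x y
  rw [hxy, map_zero, eq_comm, CharTwo.add_eq_zero] at h0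
  have hx' : FiniteField.frobeniusAlgHom F K x ≠ 0 := by
    simpa using hx
  obtain ⟨r, hr⟩ := exists_algebraMap_of_frobenius_eq (F := F) (t := y / x) (by
    rw [map_div₀, div_eq_div_iff hx' hx, mul_comm, h0, mul_comm])
  exact ⟨r, by rw [Algebra.smul_def, hr, div_mul_cancel₀ _ hx]⟩

theorem exists_sq_eq (a : F) : ∃ r : F, r ^ 2 = a := by
  obtain ⟨r, hr⟩ := (frobeniusEquiv F 2).surjective a
  exact ⟨r, by simpa [frobenius_def] using hr⟩

theorem sq_injective_of_charTwo {a b : F} (hab : a ^ 2 = b ^ 2) : a = b :=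
  frobenius_inj F 2 (by simpa [frobenius_def] using hab)

end NormForm

section SemilinearGroup

variable (F K : Type*) [Field F] [Field K] [Algebra F K]

/-- The group of bijective semilinear maps of a field extension. -/
def semilinearGroup : Subgroup (Equiv.Perm K) where
  carrier := {g | (∀ x y, g (x + y) = g x + g y) ∧
    ∃ τ : F ≃+* F, ∀ (c : F) (x : K), g (c • x) = τ c • g x}
  mul_mem' := by
    rintro g g' ⟨ha, τ, h⟩ ⟨ha', τ', h'⟩
    exact ⟨fun x y => by simp [ha, ha'], τ'.trans τ, fun c x => by simp [h, h']⟩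
  one_mem' := ⟨fun x y => rfl, RingEquiv.refl F, fun c x => rfl⟩
  inv_mem' := by
    rintro g ⟨ha, τ, h⟩
    refine ⟨fun x y => g.injective ?_, τ.symm, fun c x => g.injective ?_⟩
    · simp [ha]
    · simp [h]

variable {F K} [Fintype F] [Fintype K] [CharP F 2]

theorem exists_normPolar_semilinear (h : Fintype.card K = Fintype.card F ^ 2) {g : Equiv.Perm K}
    (ha : ∀ x y, g (x + y) = g x + g y) {τ : F ≃+* F}
    (hg : ∀ (c : F) (x : K), g (c • x) = τ c • g x) :
    ∃ δ : F, ∀ x y : K, normPolar (g x) (g y) = δ * τ (normPolar x y) := by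
  have : CharP K 2 := charP_of_injective_algebraMap (algebraMap F K).injective 2
  obtain ⟨f, hf⟩ := exists_normPolar_eq (one_ne_zero : (1 : K) ≠ 0) (1 : F) h
  have hf' : normPolar f 1 = (1 : F) := by rw [normPolar_comm h, hf]
  have key : ∀ x : K, ∃ a b : F, x = a • (1 : K) + b • f := by
    intro x
    have h0 : normPolar (F := F) 1 (x + normPolar (F := F) 1 x • f) = 0 := by
      rw [normPolar_add_right, normPolar_smul_right, hf, mul_one, CharTwo.add_self_eq_zero]
    obtain ⟨r, hr⟩ := exists_smul_of_normPolar_eq_zero h one_ne_zero h0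
    refine ⟨r, normPolar (F := F) 1 x, ?_⟩
    rw [← hr, add_assoc, CharTwo.add_self_eq_zero, add_zero]
  refine ⟨normPolar (g 1) (g f), fun x y => ?_⟩
  obtain ⟨a, b, rfl⟩ := key x
  obtain ⟨c, d, rfl⟩ := key y
  simp only [ha, hg, normPolar_add_left, normPolar_add_right, normPolar_smul_left,
    normPolar_smul_right, normPolar_self h, hf, hf', normPolar_comm h (g f) (g 1), map_add, map_mul, map_one,
    map_zero]
  ring

theorem exists_norm_addMonoidHom (h : Fintype.card K = Fintype.card F ^ 2) {g : Equiv.Perm K}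
    (hg : g ∈ semilinearGroup F K) :
    ∃ A : F × K →+ F × K, ∀ x : K, A (Algebra.norm F x, x) = (Algebra.norm F (g x), g x) := by
  obtain ⟨ha, τ, hg⟩ := hg
  obtain ⟨δ, hδ⟩ := exists_normPolar_semilinear h ha hg
  refine ⟨AddMonoidHom.mk' (fun p => (δ * τ p.1 +
    (Algebra.norm F (g p.2) - δ * τ (Algebra.norm F p.2)), g p.2)) ?_, fun x => ?_⟩
  · rintro ⟨a, x⟩ ⟨b, y⟩
    ext
    · simp only [Prod.mk_add_mk, map_add, ha, norm_add_quadratic h, hδ]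
      ring
    · simp [ha]
  · simp

theorem mem_semilinearGroup_of_preserves_relations (h : Fintype.card K = Fintype.card F ^ 2)
    {ρ : K → K} (hinj : Function.Injective ρ)
    (H : ∀ s : List K, s.sum = 0 → (s.map (Algebra.norm F)).sum = 0 →
      (s.map ρ).sum = 0 ∧ (s.map fun x => Algebra.norm F (ρ x)).sum = 0) :
    ∃ g ∈ semilinearGroup F K, ∀ x, g x = ρ x := by
  have : CharP K 2 := charP_of_injective_algebraMap (algebraMap F K).injective 2
  have hsurj : Function.Surjective ρ := Finite.surjective_of_injective hinj
  have h0 : ρ 0 = 0 := by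
    simpa using (H [0] (by simp) (by simp [Algebra.norm_zero])).1
  have tri : ∀ x y : K, normPolar (F := F) x y = 0 →
      ρ (x + y) = ρ x + ρ y ∧ normPolar (F := F) (ρ x) (ρ y) = 0 := by
    intro x y hxy
    have := H [x, y, x + y]
      (by simp only [List.sum_cons, List.sum_nil]; linear_combination CharTwo.add_self_eq_zero (x + y))
      (by
        simp only [List.map_cons, List.map_nil, List.sum_cons, List.sum_nil,
          norm_add_quadratic h, hxy]
        linear_combination CharTwo.add_self_eq_zero (Algebra.norm F x + Algebra.norm F y))
    simp only [List.map_cons, List.map_nil, List.sum_cons, List.sum_nil, add_zero] at this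
    obtain ⟨h1, h2⟩ := this
    have h3 : ρ (x + y) = ρ x + ρ y := by
      rw [← add_assoc, CharTwo.add_eq_zero] at h1
      exact h1.symm
    refine ⟨h3, ?_⟩
    rw [h3, norm_add_quadratic h] at h2
    linear_combination h2 - CharTwo.add_self_eq_zero (Algebra.norm F (ρ x) + Algebra.norm F (ρ y))
  have hadd : ∀ x y : K, ρ (x + y) = ρ x + ρ y := by
    intro x y
    by_contra hne
    have hw : ρ x + ρ y + ρ (x + y) ≠ 0 := fun h1 => hne (CharTwo.add_eq_zero.mp h1).symm
    obtain ⟨x', hx'⟩ := hsurj (ρ x + ρ y + ρ (x + y))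
    have hx0 : x' ≠ 0 := by
      rintro rfl
      exact hw (by rw [← hx', h0])
    obtain ⟨y', hy'⟩ := exists_normPolar_eq hx0 (normPolar (F := F) x y) h
    have := (H [x, y, x + y, x', y', x' + y']
      (by
        simp only [List.sum_cons, List.sum_nil]
        linear_combination CharTwo.add_self_eq_zero (x + y) + CharTwo.add_self_eq_zero (x' + y'))
      (by
        simp only [List.map_cons, List.map_nil, List.sum_cons, List.sum_nil,
          norm_add_quadratic h, hy']
        linear_combination CharTwo.add_self_eq_zero (Algebra.norm F x + Algebra.norm F y +
          Algebra.norm F x' + Algebra.norm F y' + normPolar (F := F) x y))).1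
    simp only [List.map_cons, List.map_nil, List.sum_cons, List.sum_nil, add_zero, hx'] at this
    have h4 : ρ y' + ρ (x' + y') = 0 := by
      linear_combination this - CharTwo.add_self_eq_zero (ρ x + ρ y + ρ (x + y))
    have h5 := hinj (CharTwo.add_eq_zero.mp h4)
    exact hx0 (by simpa using h5)
  have hne0 : ∀ {x : K}, x ≠ 0 → ρ x ≠ 0 := fun hx hρ => hx (hinj (hρ.trans h0.symm))
  have hline : ∀ (x : K) (c : F), ∃ t : F, ρ (c • x) = t • ρ x := by
    intro x c
    by_cases hx : x = 0
    · exact ⟨0, by simp [hx, h0]⟩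
    · exact exists_smul_of_normPolar_eq_zero h (hne0 hx)
        (tri x (c • x) (by rw [normPolar_smul_right, normPolar_self h, mul_zero])).2
  choose T hT using hline
  have hTinj : ∀ {x : K}, x ≠ 0 → Function.Injective (T x) := by
    intro x hx c d hcd
    have : ρ (c • x) = ρ (d • x) := by rw [hT, hT, hcd]
    exact smul_left_injective F hx (hinj this)
  have hTsurj : ∀ {x : K}, x ≠ 0 → Function.Surjective (T x) :=
    fun hx => Finite.surjective_of_injective (hTinj hx)
  have hTeq : ∀ {x y : K}, normPolar (F := F) x y ≠ 0 → T x = T y := by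
    intro x y hxy
    have hx : x ≠ 0 := by
      rintro rfl
      exact hxy (by simp [normPolar])
    have hρ : normPolar (F := F) (ρ x) (ρ y) ≠ 0 := by
      intro hz
      obtain ⟨r, hr⟩ := exists_smul_of_normPolar_eq_zero h (hne0 hx) hz
      obtain ⟨c, rfl⟩ := hTsurj hx r
      rw [← hT] at hr
      rw [hinj hr, normPolar_smul_right, normPolar_self h, mul_zero] at hxy
      exact hxy rfl
    funext c
    have e : T (x + y) c • (ρ x + ρ y) = T x c • ρ x + T y c • ρ y := by
      rw [← hadd, ← hT, smul_add, hadd, hT, hT]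
    have e1 := congrArg (fun z => normPolar (F := F) (ρ x) z) e
    have e2 := congrArg (fun z => normPolar (F := F) (ρ y) z) e
    simp only [normPolar_add_right, normPolar_smul_right, normPolar_self h, mul_zero, zero_add,
      add_zero, normPolar_comm h (ρ y) (ρ x)] at e1 e2
    exact (mul_right_cancel₀ hρ e2).symm.trans (mul_right_cancel₀ hρ e1)
  have hT1 : ∀ (c : F) (y : K), ρ (c • y) = T 1 c • ρ y := by
    intro c y
    by_cases hy : y = 0
    · simp [hy, h0]
    by_cases h1 : normPolar (F := F) 1 y = 0
    · obtain ⟨r, rfl⟩ := exists_smul_of_normPolar_eq_zero h one_ne_zero h1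
      obtain ⟨z, hz⟩ := exists_normPolar_eq (one_ne_zero : (1 : K) ≠ 0) (1 : F) h
      have hr : r ≠ 0 := by
        rintro rfl
        exact hy (zero_smul _ _)
      rw [hT, hTeq (x := 1) (y := z) (by rw [hz]; exact one_ne_zero),
        hTeq (x := r • 1) (y := z) (by rw [normPolar_smul_left, hz, mul_one]; exact hr)]
    · rw [hTeq h1, hT]
  have hρ1 : ρ 1 ≠ 0 := hne0 one_ne_zero
  let τ : F →+* F :=
    { toFun := T 1
      map_one' := smul_left_injective F hρ1 (by
        change T 1 1 • ρ 1 = (1 : F) • ρ 1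
        rw [← hT, one_smul, one_smul])
      map_mul' := fun c d => smul_left_injective F hρ1 (by
        change T 1 (c * d) • ρ 1 = (T 1 c * T 1 d) • ρ 1
        rw [← hT, mul_smul, hT1, hT, mul_smul])
      map_zero' := smul_left_injective F hρ1 (by
        change T 1 0 • ρ 1 = (0 : F) • ρ 1
        rw [← hT, zero_smul, zero_smul, h0])
      map_add' := fun c d => smul_left_injective F hρ1 (by
        change T 1 (c + d) • ρ 1 = (T 1 c + T 1 d) • ρ 1
        rw [← hT, add_smul, hadd, hT, hT, add_smul]) }
  refine ⟨Equiv.ofBijective ρ ⟨hinj, hsurj⟩, ⟨hadd,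
    RingEquiv.ofBijective τ ⟨hTinj one_ne_zero, hTsurj one_ne_zero⟩, fun c x => ?_⟩, fun x => rfl⟩
  exact hT1 c x

end SemilinearGroup

section SemilinearCard

variable {F K : Type*} [Field F] [Field K] [Algebra F K] [Fintype F] [Fintype K]

/-- Applying an automorphism of the base field to the coordinates in a basis. -/
noncomputable def coordinatewise {ι : Type*} [Fintype ι] (b : Module.Basis ι F K) (τ : F ≃+* F) :
    Equiv.Perm K :=
  b.equivFun.toEquiv.trans ((Equiv.arrowCongr (Equiv.refl ι) τ.toEquiv).trans
    b.equivFun.symm.toEquiv)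

theorem equivFun_coordinatewise {ι : Type*} [Fintype ι] (b : Module.Basis ι F K) (τ : F ≃+* F)
    (x : K) (i : ι) : b.equivFun (coordinatewise b τ x) i = τ (b.equivFun x i) :=
  congrFun (b.equivFun.apply_symm_apply fun i => τ (b.equivFun x i)) i

theorem coordinatewise_add {ι : Type*} [Fintype ι] (b : Module.Basis ι F K) (τ : F ≃+* F)
    (x y : K) : coordinatewise b τ (x + y) = coordinatewise b τ x + coordinatewise b τ y := by
  apply b.equivFun.injective
  ext i
  simp only [map_add, Pi.add_apply, equivFun_coordinatewise]

theorem coordinatewise_smul {ι : Type*} [Fintype ι] (b : Module.Basis ι F K) (τ : F ≃+* F)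
    (c : F) (x : K) : coordinatewise b τ (c • x) = τ c • coordinatewise b τ x := by
  apply b.equivFun.injective
  ext i
  simp only [map_smul, Pi.smul_apply, smul_eq_mul, map_mul, equivFun_coordinatewise]

theorem card_linearEquiv_quadratic (h : Fintype.card K = Fintype.card F ^ 2) :
    Nat.card (K ≃ₗ[F] K) =
      (Fintype.card F ^ 2 - 1) * (Fintype.card F ^ 2 - Fintype.card F) := by
  classical
  let b : Module.Basis (Fin 2) F K := Module.finBasisOfFinrankEq F K (finrank_of_card_eq_sq h)
  have e : GL (Fin 2) F ≃ (K ≃ₗ[F] K) :=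
    (Matrix.GeneralLinearGroup.toLin.toEquiv.trans
      (LinearMap.GeneralLinearGroup.generalLinearEquiv F (Fin 2 → F)).toEquiv).trans
      { toFun := fun f => b.equivFun.trans (f.trans b.equivFun.symm)
        invFun := fun f => b.equivFun.symm.trans (f.trans b.equivFun)
        left_inv := fun f => LinearEquiv.ext fun x => by
          simp only [LinearEquiv.trans_apply, LinearEquiv.apply_symm_apply]
        right_inv := fun f => LinearEquiv.ext fun x => by
          simp only [LinearEquiv.trans_apply, LinearEquiv.symm_apply_apply] }
  rw [← Nat.card_congr e, Matrix.card_GL_field]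
  simp [Fin.prod_univ_two]

theorem card_ringEquiv_of_card_eq_two_pow [Algebra (ZMod 2) F] {m : ℕ}
    (h : Fintype.card F = 2 ^ m) : Nat.card (F ≃+* F) = m := by
  have hfin : Module.finrank (ZMod 2) F = m := by
    rw [Module.card_eq_pow_finrank (K := ZMod 2) (V := F), ZMod.card] at h
    exact Nat.pow_right_injective le_rfl h
  rw [← hfin, ← IsGalois.card_aut_eq_finrank]
  refine Nat.card_congr
    { toFun := fun τ => AlgEquiv.ofRingEquiv (f := τ) fun r => ?_
      invFun := fun f => f.toRingEquiv
      left_inv := fun τ => rfl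
      right_inv := fun f => rfl }
  exact RingHom.congr_fun (Subsingleton.elim ((τ : F →+* F).comp (algebraMap (ZMod 2) F)) _) r

theorem card_semilinearGroup [Algebra (ZMod 2) F] {m : ℕ} (hF : Fintype.card F = 2 ^ m)
    (h : Fintype.card K = Fintype.card F ^ 2) :
    Nat.card (semilinearGroup F K) =
      m * (Fintype.card F ^ 2 - 1) * (Fintype.card F ^ 2 - Fintype.card F) := by
  rw [mul_assoc, ← card_linearEquiv_quadratic h, ← card_ringEquiv_of_card_eq_two_pow hF,
    ← Nat.card_prod]
  let b : Module.Basis (Fin 2) F K := Module.finBasisOfFinrankEq F K (finrank_of_card_eq_sq h)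
  let f : (F ≃+* F) × (K ≃ₗ[F] K) → semilinearGroup F K := fun p =>
    ⟨(coordinatewise b p.1).trans p.2.toEquiv,
      fun x y => by simp [coordinatewise_add],
      p.1, fun c x => by simp [coordinatewise_smul]⟩
  symm
  apply Nat.card_eq_of_bijective f
  constructor
  · rintro ⟨τ, L⟩ ⟨τ', L'⟩ hf
    have hv : ∀ x, L (coordinatewise b τ x) = L' (coordinatewise b τ' x) := fun x =>
      congrArg (fun p : semilinearGroup F K => (p : Equiv.Perm K) x) hf
    have hne : coordinatewise b τ 1 ≠ 0 := by
      intro h0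
      have h1 : coordinatewise b τ 0 = 0 := by
        simpa using coordinatewise_smul b τ 0 0
      exact one_ne_zero ((coordinatewise b τ).injective (h0.trans h1.symm))
    have hτ : τ = τ' := by
      ext c
      have h1 := hv (c • 1)
      rw [coordinatewise_smul, coordinatewise_smul, map_smul, map_smul, ← hv 1] at h1
      exact smul_left_injective F (by simpa using hne) h1
    subst hτ
    have hL : L = L' := by
      ext x
      simpa using hv ((coordinatewise b τ).symm x)
    rw [hL]
  · rintro ⟨g, ha, τ, hg⟩
    have hs : ∀ x, coordinatewise b τ ((coordinatewise b τ).symm x) = x := by simp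
    refine ⟨(τ, LinearEquiv.ofBijective
      { toFun := fun x => g ((coordinatewise b τ).symm x)
        map_add' := fun x y => ?_
        map_smul' := fun c x => ?_ } ?_), ?_⟩
    · rw [← ha]
      congr 1
      apply (coordinatewise b τ).injective
      rw [coordinatewise_add, hs, hs, hs]
    · rw [RingHom.id_apply, ← τ.apply_symm_apply c, ← hg]
      congr 1
      apply (coordinatewise b τ).injective
      rw [coordinatewise_smul, hs, hs]
    · exact g.bijective.comp (coordinatewise b τ).symm.bijective
    · apply Subtype.ext
      ext x
      simp [f]

end SemilinearCard

section GroupRelations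

theorem exists_monoidHom_of_rel {G X : Type*} [Group G] [Group X] {S : Set X} {R : G → X → Prop}
    (hmul : ∀ g g' e e', R g e → R g' e' → R (g * g') (e * e')) (hex : ∀ g, ∃ e, R g e)
    (huniq : ∀ g e e', R g e → R g e' → e = e') (hinj : ∀ g g' e, R g e → R g' e → g = g')
    (hS : ∀ e, e ∈ S ↔ ∃ g, R g e) :
    ∃ φ : G →* X, Function.Injective φ ∧ Set.range φ = S ∧ ∀ g, R g (φ g) := by
  choose f hf using hex
  refine ⟨MonoidHom.mk' f fun g g' => huniq _ _ _ (hf _) (hmul _ _ _ _ (hf g) (hf g')), ?_, ?_, hf⟩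
  · intro g g' h
    exact hinj g g' (f g) (hf g) ((show f g = f g' from h) ▸ hf g')
  · ext e
    rw [hS]
    constructor
    · rintro ⟨g, rfl⟩
      exact ⟨g, hf g⟩
    · rintro ⟨g, hg⟩
      exact ⟨g, huniq _ _ _ (hf g) hg⟩

theorem mulBijOn_range {G X Y : Type*} [Group G] [Group X] [Group Y] {φ : G →* X} {ψ : G →* Y}
    (hφ : Function.Injective φ) (hψ : Function.Injective ψ) :
    MulBijOn (Set.range φ) (Set.range ψ) := by
  have key : ∀ g, ψ (Function.invFun φ (φ g)) = ψ g := fun g => by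
    rw [Function.leftInverse_invFun hφ g]
  refine ⟨fun x => ψ (Function.invFun φ x), ⟨?_, ?_, ?_⟩, ?_⟩
  · rintro _ ⟨g, rfl⟩
    exact ⟨g, (key g).symm⟩
  · rintro _ ⟨g, rfl⟩ _ ⟨g', rfl⟩ h
    simp only [key] at h
    rw [hψ h]
  · rintro _ ⟨g, rfl⟩
    exact ⟨φ g, ⟨g, rfl⟩, key g⟩
  · rintro _ ⟨g, rfl⟩ _ ⟨g', rfl⟩
    simp only [← map_mul, key]

end GroupRelations

section Codes

variable {F : Type*} [Field F] {ι : Type*} [Fintype ι]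

theorem dualSet_dualSet (C : Submodule F (ι → F)) :
    dualSet (dualSet (C : Set (ι → F))) = C := by
  classical
  let B : LinearMap.BilinForm F (ι → F) := LinearMap.mk₂ F (fun x y => ∑ i, x i * y i)
    (fun x y z => by simp [add_mul, Finset.sum_add_distrib])
    (fun c x y => by simp [Finset.mul_sum, mul_assoc])
    (fun x y z => by simp [mul_add, Finset.sum_add_distrib])
    (fun c x y => by simp [Finset.mul_sum, mul_left_comm])
  have hB : ∀ x y, B x y = ∑ i, x i * y i := fun x y => rfl
  have hsymm : ∀ x y, B x y = B y x := fun x y => by simp only [hB, mul_comm]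
  have hrefl : B.IsRefl := fun x y h => by rw [hsymm, h]
  have hnd : B.Nondegenerate := by
    refine ⟨fun x hx => ?_, fun x hx => ?_⟩
    · ext i
      simpa [hB, Pi.single_apply] using hx (Pi.single i 1)
    · ext i
      simpa [hB, Pi.single_apply] using hx (Pi.single i 1)
  have hdual : ∀ D : Submodule F (ι → F), dualSet (D : Set (ι → F)) = B.orthogonal D := by
    intro D
    ext y
    simp [dualSet, LinearMap.BilinForm.mem_orthogonal_iff, hB]
  rw [hdual, hdual, LinearMap.BilinForm.orthogonal_orthogonal hnd hrefl]

theorem image_eq_self_of_forall_mem {X : Type*} [Finite X] {C : Set X} (e : Equiv.Perm X)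
    (h : ∀ v ∈ C, e v ∈ C) : e '' C = C :=
  Set.eq_of_subset_of_ncard_le (Set.image_subset_iff.mpr h)
    (Set.ncard_image_of_injective C e.injective).ge C.toFinite

theorem autSSet_subset_aut0Set (C : Set (ι → F)) : autSSet C ⊆ aut0Set C := by
  rintro e ⟨⟨π, τ, c, hc, he⟩, hC⟩
  refine ⟨⟨π, fun i => τ.toEquiv.trans (Equiv.mulLeft₀ (c i) (hc i)), fun i => ?_, fun v i => ?_⟩, hC⟩
  · simp
  · simp [he]

theorem exists_perm_of_monomial (π : Equiv.Perm ι) (τ : F ≃+* F) {c : ι → F} (hc : ∀ i, c i ≠ 0) :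
    ∃ e : Equiv.Perm (ι → F), ∀ v i, e v i = c i * τ (v (π⁻¹ i)) := by
  refine ⟨(Equiv.arrowCongr π τ.toEquiv).trans
    (Equiv.piCongrRight fun i => Equiv.mulLeft₀ (c i) (hc i)), fun v i => ?_⟩
  simp [Equiv.arrowCongr]

theorem image_dualSet_of_contragredient [Finite F] {C : Set (ι → F)} {e e' : Equiv.Perm (ι → F)}
    {π : Equiv.Perm ι} {τ : F ≃+* F} {c d : ι → F} (hcd : ∀ i, c i * d i = 1)
    (he : ∀ v i, e v i = c i * τ (v (π⁻¹ i))) (he' : ∀ v i, e' v i = d i * τ (v (π⁻¹ i)))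
    (hC : e '' C = C) : e' '' dualSet C = dualSet C := by
  refine image_eq_self_of_forall_mem e' fun y hy x hx => ?_
  rw [← hC] at hx
  obtain ⟨u, hu, rfl⟩ := hx
  have h1 : ∀ i, e u i * e' y i = τ (u (π⁻¹ i) * y (π⁻¹ i)) := fun i => by
    rw [he, he', map_mul]
    linear_combination (τ (u (π⁻¹ i)) * τ (y (π⁻¹ i))) * hcd i
  simp only [h1]
  rw [← map_sum, Equiv.sum_comp π⁻¹ fun i => u i * y i, hy u hu, map_zero]

theorem perm_zmod_two_eq_self {σ : Equiv.Perm (ZMod 2)} (h : σ 0 = 0) (a : ZMod 2) : σ a = a := by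
  have h1 : σ 1 ≠ 0 := fun h1 => by simpa using σ.injective (h1.trans h.symm)
  have h2 : ∀ b : ZMod 2, b = 0 ∨ b = 1 := by decide
  rcases h2 a with rfl | rfl
  · exact h
  · exact (h2 _).resolve_left h1

theorem aut0Set_zmod_two (C : Set (ι → ZMod 2)) :
    aut0Set C = {e : Equiv.Perm (ι → ZMod 2) |
      (∃ π : Equiv.Perm ι, ∀ v i, e v i = v (π⁻¹ i)) ∧ e '' C = C} := by
  ext e
  constructor
  · rintro ⟨⟨π, σ, h0, he⟩, hC⟩
    exact ⟨⟨π, fun v i => by rw [he, perm_zmod_two_eq_self (h0 i)]⟩, hC⟩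
  · rintro ⟨⟨π, he⟩, hC⟩
    exact ⟨⟨π, fun _ => Equiv.refl _, fun _ => rfl, he⟩, hC⟩

theorem aut0Set_eq_autSSet_zmod_two (C : Set (ι → ZMod 2)) : aut0Set C = autSSet C := by
  refine (autSSet_subset_aut0Set C).antisymm' ?_
  rw [aut0Set_zmod_two]
  rintro e ⟨⟨π, he⟩, hC⟩
  exact ⟨⟨π, RingEquiv.refl _, fun _ => 1, fun _ => one_ne_zero, fun v i => by simp [he]⟩, hC⟩

theorem aut0Set_dualSet_zmod_two (C : Submodule (ZMod 2) (ι → ZMod 2)) :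
    aut0Set (dualSet (C : Set (ι → ZMod 2))) = aut0Set (C : Set (ι → ZMod 2)) := by
  have key : ∀ D : Set (ι → ZMod 2), aut0Set D ⊆ aut0Set (dualSet D) := by
    intro D
    rw [aut0Set_zmod_two, aut0Set_zmod_two]
    rintro e ⟨⟨π, he⟩, hD⟩
    have h1 : ∀ v i, e v i = (1 : ι → ZMod 2) i * RingEquiv.refl (ZMod 2) (v (π⁻¹ i)) :=
      fun v i => by simp [he]
    exact ⟨⟨π, he⟩, image_dualSet_of_contragredient (c := 1) (d := 1) (by simp) h1 h1 hD⟩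
  refine Set.Subset.antisymm ?_ (key _)
  have := key (dualSet (C : Set (ι → ZMod 2)))
  rwa [dualSet_dualSet] at this

end Codes

section Relations

variable {F K W : Type*} [Field F] [Field K] [Fintype F] [Fintype K] [Algebra F K] [CharP F 2]
  [AddCommGroup W]

theorem mem_semilinearGroup_of_map_ker (h : Fintype.card K = Fintype.card F ^ 2)
    (L : W →+ F × K) (e : W →+ W) {T : K → W} {ρ : K → K} (hinj : Function.Injective ρ)
    (hT : ∀ x, L (T x) = (Algebra.norm F x, x)) (he : ∀ x, e (T x) = T (ρ x))
    (hker : ∀ w, L w = 0 → L (e w) = 0) :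
    ∃ g ∈ semilinearGroup F K, ∀ x, g x = ρ x := by
  refine mem_semilinearGroup_of_preserves_relations h hinj fun s h1 h2 => ?_
  have hL : ∀ f : K → K, L ((s.map fun x => T (f x)).sum) =
      ((s.map fun x => Algebra.norm F (f x)).sum, (s.map f).sum) := by
    intro f
    clear h1 h2
    induction s with
    | nil => simp [← Prod.zero_eq_mk]
    | cons x s ih =>
      rw [List.map_cons, List.sum_cons, map_add, ih, hT]
      simp
  have h3 : L ((s.map T).sum) = 0 := by
    have := hL id
    simp only [id_eq, List.map_id] at this
    rw [this, h1, h2]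
    rfl
  have h4 := hker _ h3
  rw [map_list_sum, List.map_map] at h4
  have h5 : (e ∘ T) = fun x => T (ρ x) := funext he
  rw [h5, hL ρ] at h4
  exact ⟨congrArg Prod.snd h4, congrArg Prod.fst h4⟩

theorem map_ker_of_mem_semilinearGroup (h : Fintype.card K = Fintype.card F ^ 2)
    (L : W →+ F × K) (e : W →+ W) {T : K → W} {g : Equiv.Perm K} (hg : g ∈ semilinearGroup F K)
    (hT : ∀ x, L (T x) = (Algebra.norm F x, x)) (he : ∀ x, e (T x) = T (g x))
    (hgen : AddSubmonoid.closure (Set.range T) = ⊤) {w : W} (hw : L w = 0) : L (e w) = 0 := by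
  obtain ⟨A, hA⟩ := exists_norm_addMonoidHom h hg
  have key : L.comp e = A.comp L := AddMonoidHom.eq_of_eqOn_denseM hgen (by
    rintro _ ⟨x, rfl⟩
    simp [he, hT, hA])
  have := DFunLike.congr_fun key w
  simpa [hw] using this

end Relations

section NormOneFamily

/-- A family enumerating, without repetition, the elements of norm one. -/
structure IsNormOneFamily (F : Type*) {K ι : Type*} [Field F] [Field K] [Algebra F K]
    (z : ι → K) : Prop where
  injective : Function.Injective z
  norm_eq_one : ∀ j, Algebra.norm F (z j) = 1
  exists_eq : ∀ w : K, Algebra.norm F w = 1 → ∃ j, z j = w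

variable {F K : Type*} [Field F] [Field K] [Algebra F K] {ι : Type*} [Fintype ι]

/-- The linear relations satisfied by the vectors `(1, z j)`. -/
def relationCode (F : Type*) {K ι : Type*} [Field F] [Field K] [Algebra F K] [Fintype ι]
    (z : ι → K) : Submodule F (ι → F) where
  carrier := {v | ∑ j, v j = 0 ∧ ∑ j, v j • z j = 0}
  add_mem' := by
    rintro v w ⟨h1, h2⟩ ⟨h3, h4⟩
    simp [add_smul, Finset.sum_add_distrib, h1, h2, h3, h4]
  zero_mem' := by simp
  smul_mem' := by
    rintro c v ⟨h1, h2⟩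
    simp [mul_smul, ← Finset.mul_sum, ← Finset.smul_sum, h1, h2]

/-- The values at the vectors `(1, z j)` of the linear forms on `F × K`. -/
noncomputable def evaluationCode (F : Type*) {K ι : Type*} [Field F] [Field K] [Algebra F K]
    (z : ι → K) : Submodule F (ι → F) where
  carrier := {w | ∃ (c : F) (δ : K), ∀ j, w j = c + Algebra.trace F K (δ * z j)}
  add_mem' := by
    rintro v w ⟨c, δ, h⟩ ⟨c', δ', h'⟩
    refine ⟨c + c', δ + δ', fun j => ?_⟩
    rw [Pi.add_apply, h, h', add_mul, map_add]
    ring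
  zero_mem' := ⟨0, 0, by simp⟩
  smul_mem' := by
    rintro r v ⟨c, δ, h⟩
    refine ⟨r * c, r • δ, fun j => ?_⟩
    rw [Pi.smul_apply, h, smul_mul_assoc, map_smul, smul_eq_mul, smul_eq_mul, mul_add]

theorem mem_relationCode {z : ι → K} {v : ι → F} :
    v ∈ relationCode F z ↔ ∑ j, v j = 0 ∧ ∑ j, v j • z j = 0 :=
  Iff.rfl

variable [Fintype F] [Fintype K]

theorem eq_zero_of_forall_trace_mul_eq_zero {x : K}
    (hx : ∀ δ : K, Algebra.trace F K (δ * x) = 0) : x = 0 := by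
  by_contra hne
  obtain ⟨t, ht⟩ := Algebra.trace_surjective F K 1
  have := hx (t / x)
  rw [div_mul_cancel₀ _ hne, ht] at this
  exact one_ne_zero this

theorem dualSet_evaluationCode (z : ι → K) :
    dualSet (evaluationCode F z : Set (ι → F)) = relationCode F z := by
  have key : ∀ (c : F) (δ : K) (v : ι → F), ∑ j, (c + Algebra.trace F K (δ * z j)) * v j =
      c * ∑ j, v j + Algebra.trace F K (δ * ∑ j, v j • z j) := by
    intro c δ v
    simp only [add_mul, Finset.sum_add_distrib, Finset.mul_sum, map_sum, mul_smul_comm, map_smul,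
      smul_eq_mul]
    simp only [mul_comm]
  ext v
  constructor
  · intro hv
    have h1 : ∀ (c : F) (δ : K), c * ∑ j, v j + Algebra.trace F K (δ * ∑ j, v j • z j) = 0 :=
      fun c δ => by
        rw [← key]
        exact hv (fun j => c + Algebra.trace F K (δ * z j)) ⟨c, δ, fun j => rfl⟩
    exact ⟨by simpa using h1 1 0, eq_zero_of_forall_trace_mul_eq_zero (F := F) fun δ => by
      simpa using h1 0 δ⟩
  · rintro ⟨h1, h2⟩ w ⟨c, δ, hw⟩
    simp only [hw, key, h1, h2, mul_zero, map_zero, add_zero]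

theorem dualSet_relationCode (z : ι → K) :
    dualSet (relationCode F z : Set (ι → F)) = evaluationCode F z := by
  rw [← dualSet_evaluationCode, dualSet_dualSet]

namespace IsNormOneFamily

variable {z : ι → K}

theorem ne_zero (hz : IsNormOneFamily F z) (j : ι) : z j ≠ 0 := by
  intro h0
  have h := hz.norm_eq_one j
  rw [h0, Algebra.norm_zero] at h
  exact zero_ne_one h

variable [CharP F 2]

theorem exists_smul_eq (hz : IsNormOneFamily F z) (h : Fintype.card K = Fintype.card F ^ 2)
    (x : K) : ∃ j, ∃ r : F, x = r • z j := by
  by_cases hx : x = 0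
  · obtain ⟨j, -⟩ := hz.exists_eq 1 (map_one _)
    exact ⟨j, 0, by simp [hx]⟩
  · obtain ⟨r, hr⟩ := exists_sq_eq (Algebra.norm F x)
    have hr0 : r ≠ 0 := by
      rintro rfl
      rw [zero_pow two_ne_zero, eq_comm, Algebra.norm_eq_zero_iff] at hr
      exact hx hr
    obtain ⟨j, hj⟩ := hz.exists_eq (r⁻¹ • x) (by
      rw [norm_smul_quadratic h, ← hr, ← mul_pow, inv_mul_cancel₀ hr0, one_pow])
    exact ⟨j, r, by rw [hj, smul_inv_smul₀ hr0]⟩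

theorem eq_of_smul_eq (hz : IsNormOneFamily F z) (h : Fintype.card K = Fintype.card F ^ 2)
    {i j : ι} {r s : F} (hr : r ≠ 0) (hrs : r • z i = s • z j) : i = j ∧ r = s := by
  have h1 := congrArg (Algebra.norm F) hrs
  rw [norm_smul_quadratic h, norm_smul_quadratic h, hz.norm_eq_one, hz.norm_eq_one, mul_one,
    mul_one] at h1
  have h2 := sq_injective_of_charTwo h1
  subst h2
  exact ⟨hz.injective (smul_right_injective K hr hrs), rfl⟩

theorem normPolar_ne_zero (hz : IsNormOneFamily F z) (h : Fintype.card K = Fintype.card F ^ 2)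
    {i j : ι} (hij : i ≠ j) : normPolar (F := F) (z i) (z j) ≠ 0 := by
  intro h0
  obtain ⟨r, hr⟩ := exists_smul_of_normPolar_eq_zero h (hz.ne_zero i) h0
  exact hij (hz.eq_of_smul_eq h one_ne_zero ((one_smul F _).trans hr)).1.symm

variable [DecidableEq ι]

theorem exists_single (hz : IsNormOneFamily F z) (h : Fintype.card K = Fintype.card F ^ 2) :
    ∃ T : K → ι → F, ∀ (j : ι) (r : F), T (r • z j) = Pi.single j r := by
  choose d r hx using hz.exists_smul_eq h
  refine ⟨fun x => Pi.single (d x) (r x), fun j s => ?_⟩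
  by_cases hs : s = 0
  · have h0 : r 0 = 0 := by
      by_contra hne
      exact smul_ne_zero hne (hz.ne_zero _) (hx 0).symm
    subst hs
    simp [h0]
  · obtain ⟨h1, h2⟩ := hz.eq_of_smul_eq h hs (hx (s • z j))
    simp only [← h1, ← h2]

theorem exists_addMonoidHom_ker (hz : IsNormOneFamily F z)
    (h : Fintype.card K = Fintype.card F ^ 2) :
    ∃ L : (ι → F) →+ F × K,
      (∀ (j : ι) (r : F), L (Pi.single j r) = (Algebra.norm F (r • z j), r • z j)) ∧
      ∀ v, L v = 0 ↔ v ∈ relationCode F z := by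
  refine ⟨AddMonoidHom.mk' (fun v => ((∑ j, v j) ^ 2, ∑ j, v j • z j)) fun v w => ?_,
    fun j r => ?_, fun v => ?_⟩
  · simp [Finset.sum_add_distrib, add_smul, CharTwo.add_sq]
  · ext
    · simp [norm_smul_quadratic h, hz.norm_eq_one]
    · simp [Pi.single_apply]
  · simp [mem_relationCode, Prod.ext_iff]

theorem exists_mem_semilinearGroup_of_additive (hz : IsNormOneFamily F z)
    (h : Fintype.card K = Fintype.card F ^ 2) {π : Equiv.Perm ι} {σ : ι → F → F}
    (hadd : ∀ i x y, σ i (x + y) = σ i x + σ i y) (hinj : ∀ i, Function.Injective (σ i))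
    {e : (ι → F) → ι → F} (he : ∀ v i, e v i = σ i (v (π⁻¹ i)))
    (hC : ∀ v ∈ relationCode F z, e v ∈ relationCode F z) :
    ∃ g ∈ semilinearGroup F K, ∀ j (r : F), g (r • z j) = σ (π j) r • z (π j) := by
  obtain ⟨T, hT⟩ := hz.exists_single h
  obtain ⟨L, hL, hker⟩ := hz.exists_addMonoidHom_ker h
  choose d r hx using hz.exists_smul_eq h
  have h0 : ∀ i, σ i 0 = 0 := fun i => by simpa using hadd i 0 0
  have hTx : ∀ x, T x = Pi.single (d x) (r x) := fun x => by rw [← hT, ← hx]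
  let e' : (ι → F) →+ (ι → F) := AddMonoidHom.mk' e fun v w => by
    ext i
    simp [he, hadd]
  suffices H : ∃ g ∈ semilinearGroup F K, ∀ x, g x = σ (π (d x)) (r x) • z (π (d x)) by
    obtain ⟨g, hg, hgρ⟩ := H
    refine ⟨g, hg, fun j s => ?_⟩
    rw [hgρ]
    by_cases hs : s = 0
    · have hr0 : r 0 = 0 := by
        by_contra hne
        exact smul_ne_zero hne (hz.ne_zero _) (hx 0).symm
      simp [hs, hr0, h0]
    · obtain ⟨h1, h2⟩ := hz.eq_of_smul_eq h hs (hx (s • z j))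
      rw [← h1, ← h2]
  refine mem_semilinearGroup_of_map_ker h L e' (T := T) ?_ ?_ ?_ ?_
  · intro x y hxy
    beta_reduce at hxy
    by_cases h1 : σ (π (d x)) (r x) = 0
    · rw [h1, zero_smul, eq_comm] at hxy
      have h2 := (smul_eq_zero.mp hxy).resolve_right (hz.ne_zero _)
      rw [hx x, hx y, hinj _ (h1.trans (h0 _).symm), hinj _ (h2.trans (h0 _).symm), zero_smul,
        zero_smul]
    · obtain ⟨h2, h3⟩ := hz.eq_of_smul_eq h h1 hxy
      have h4 := π.injective h2
      rw [h4] at h3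
      rw [hx x, hx y, h4, hinj _ h3]
  · intro x
    rw [hTx, hL, ← hx]
  · intro x
    rw [hT, hTx]
    ext i
    change e _ i = _
    rw [he, Pi.single_apply, Pi.single_apply]
    by_cases hi : i = π (d x)
    · simp [hi]
    · rw [if_neg hi, if_neg fun h1 => hi (by rw [← h1]; simp), h0]
  · intro w hw
    exact (hker _).mpr (hC w ((hker w).mp hw))

theorem map_mem_relationCode (hz : IsNormOneFamily F z)
    (h : Fintype.card K = Fintype.card F ^ 2) {π : Equiv.Perm ι} {τ : F ≃+* F} {c : ι → F}
    {e : (ι → F) → ι → F} (he : ∀ v i, e v i = c i * τ (v (π⁻¹ i)))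
    {g : Equiv.Perm K} (hg : g ∈ semilinearGroup F K)
    (hgτ : ∀ (r : F) (x : K), g (r • x) = τ r • g x) (hgz : ∀ j, g (z j) = c (π j) • z (π j))
    {v : ι → F} (hv : v ∈ relationCode F z) : e v ∈ relationCode F z := by
  obtain ⟨T, hT⟩ := hz.exists_single h
  obtain ⟨L, hL, hker⟩ := hz.exists_addMonoidHom_ker h
  let e' : (ι → F) →+ (ι → F) := AddMonoidHom.mk' e fun v w => by
    ext i
    simp [he, mul_add]
  refine (hker _).mp (map_ker_of_mem_semilinearGroup h L e' (T := T) hg ?_ ?_ ?_ ((hker v).mpr hv))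
  · intro x
    obtain ⟨j, r, rfl⟩ := hz.exists_smul_eq h x
    rw [hT, hL]
  · intro x
    obtain ⟨j, r, rfl⟩ := hz.exists_smul_eq h x
    rw [hgτ, hgz, smul_smul, hT, hT]
    ext i
    change e _ i = _
    rw [he, Pi.single_apply, Pi.single_apply]
    by_cases hi : i = π j
    · simp [hi, mul_comm]
    · rw [if_neg hi, if_neg fun h1 => hi (by rw [← h1]; simp), map_zero, mul_zero]
  · rw [eq_top_iff]
    intro w _
    rw [← Finset.univ_sum_single w]
    exact sum_mem fun j _ => AddSubmonoid.subset_closure ⟨w j • z j, hT _ _⟩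

end IsNormOneFamily

end NormOneFamily

section MonomialForm

variable {F : Type*} [Field F] {ι : Type*}

theorem monomial_unique [Nonempty ι] {π π' : Equiv.Perm ι} {τ τ' : F ≃+* F} {c c' : ι → F}
    (hc : ∀ i, c i ≠ 0) (h : ∀ (v : ι → F) i, c i * τ (v (π⁻¹ i)) = c' i * τ' (v (π'⁻¹ i))) :
    π = π' ∧ τ = τ' ∧ c = c' := by
  classical
  have hcc : ∀ i, c i = c' i := fun i => by simpa using h (fun _ => 1) i
  refine ⟨inv_injective (Equiv.ext fun i => ?_), RingEquiv.ext fun a => ?_, funext hcc⟩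
  · by_contra hne
    have h1 := h (Pi.single (π⁻¹ i) 1) i
    rw [Pi.single_eq_same, Pi.single_eq_of_ne (Ne.symm hne), map_one, map_zero, mul_one,
      mul_zero] at h1
    exact hc i h1
  · obtain ⟨i⟩ := ‹Nonempty ι›
    have h1 := h (fun _ => a) i
    rw [← hcc i] at h1
    exact mul_left_cancel₀ (hc i) h1

end MonomialForm

section MonomialAction

variable {F K : Type*} [Field F] [Field K] [Algebra F K] {ι : Type*} [Fintype ι]

/-- The map `g` is `τ`-semilinear and sends the line spanned by `z j` to the line spanned by
`z (π j)`, with coefficients `c`. -/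
structure IsMonomialAction (z : ι → K) (g : Equiv.Perm K) (π : Equiv.Perm ι) (τ : F ≃+* F)
    (c : ι → F) : Prop where
  coeff_ne_zero : ∀ i, c i ≠ 0
  map_smul : ∀ (r : F) (x : K), g (r • x) = τ r • g x
  map_family : ∀ j, g (z j) = c (π j) • z (π j)

namespace IsMonomialAction

variable {z : ι → K} {g g' : Equiv.Perm K} {π π' : Equiv.Perm ι} {τ τ' : F ≃+* F} {c c' : ι → F}

theorem mul (hg : IsMonomialAction z g π τ c) (hg' : IsMonomialAction z g' π' τ' c') :
    IsMonomialAction z (g * g') (π * π') (τ'.trans τ) fun i => c i * τ (c' (π⁻¹ i)) where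
  coeff_ne_zero i := mul_ne_zero (hg.coeff_ne_zero i) (by simpa using hg'.coeff_ne_zero _)
  map_smul r x := by simp [hg.map_smul, hg'.map_smul]
  map_family j := by simp [hg.map_smul, hg'.map_family, hg.map_family, smul_smul, mul_comm]

variable [Fintype F] [Fintype K] [CharP F 2]

theorem perm_ext (hz : IsNormOneFamily F z) (h : Fintype.card K = Fintype.card F ^ 2)
    (hg : IsMonomialAction z g π τ c) (hg' : IsMonomialAction z g' π τ c) : g = g' := by
  ext x
  obtain ⟨j, r, rfl⟩ := hz.exists_smul_eq h x
  rw [hg.map_smul, hg'.map_smul, hg.map_family, hg'.map_family]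

theorem unique (hz : IsNormOneFamily F z) (h : Fintype.card K = Fintype.card F ^ 2)
    (hg : IsMonomialAction z g π τ c) (hg' : IsMonomialAction z g π' τ' c') :
    π = π' ∧ τ = τ' ∧ c = c' := by
  have h1 : ∀ j, π j = π' j ∧ c (π j) = c' (π' j) := fun j =>
    hz.eq_of_smul_eq h (hg.coeff_ne_zero _) ((hg.map_family j).symm.trans (hg'.map_family j))
  have h2 : π = π' := Equiv.ext fun j => (h1 j).1
  subst h2
  refine ⟨rfl, RingEquiv.ext fun r => ?_, funext fun i => ?_⟩
  · obtain ⟨j, -⟩ := hz.exists_eq 1 (map_one _)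
    have h3 := (hg.map_smul r (z j)).symm.trans (hg'.map_smul r (z j))
    rw [hg.map_family] at h3
    exact smul_left_injective F (smul_ne_zero (hg.coeff_ne_zero _) (hz.ne_zero _)) h3
  · simpa using (h1 (π⁻¹ i)).2

theorem exists_of_mem_semilinearGroup (hz : IsNormOneFamily F z)
    (h : Fintype.card K = Fintype.card F ^ 2) (hg : g ∈ semilinearGroup F K) :
    ∃ (π : Equiv.Perm ι) (τ : F ≃+* F) (c : ι → F), IsMonomialAction z g π τ c := by
  obtain ⟨hadd, τ, hτ⟩ := hg
  have hg0 : g 0 = 0 := by simpa using hadd 0 0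
  choose p r hpr using fun j => hz.exists_smul_eq h (g (z j))
  have hr : ∀ j, r j ≠ 0 := fun j h0 => hz.ne_zero j (g.injective (by rw [hpr, h0, zero_smul, hg0]))
  have hp : Function.Injective p := by
    intro i j hij
    have h1 : g (z i) = g ((τ.symm (r i / r j)) • z j) := by
      rw [hτ, RingEquiv.apply_symm_apply, hpr i, hpr j, smul_smul, div_mul_cancel₀ _ (hr j), hij]
    exact (hz.eq_of_smul_eq h one_ne_zero ((one_smul F _).trans (g.injective h1))).1
  refine ⟨Equiv.ofBijective p (Finite.injective_iff_bijective.mp hp), τ,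
    fun i => r ((Equiv.ofBijective p (Finite.injective_iff_bijective.mp hp)).symm i),
    fun i => hr _, hτ, fun j => ?_⟩
  rw [Equiv.symm_apply_apply]
  exact hpr j

end IsMonomialAction

variable [Fintype F] [Fintype K] [CharP F 2] {z : ι → K}

theorem card_linear_semilinearGroup (h : Fintype.card K = Fintype.card F ^ 2) :
    Nat.card {g : semilinearGroup F K | ∀ (r : F) (x : K), g.1 (r • x) = r • g.1 x} =
      (Fintype.card F ^ 2 - 1) * (Fintype.card F ^ 2 - Fintype.card F) := by
  rw [← card_linearEquiv_quadratic h]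
  refine Nat.card_congr ⟨fun g => { g.1.1 with
      map_add' := g.1.2.1
      map_smul' := g.2 }, fun f => ⟨⟨f.toEquiv, map_add f, RingEquiv.refl F, map_smul f⟩,
        map_smul f⟩, fun g => ?_, fun f => ?_⟩
  · rfl
  · rfl

theorem exists_monoidHom_autSSet (hz : IsNormOneFamily F z)
    (h : Fintype.card K = Fintype.card F ^ 2) {χ : F →*₀ F} (hχ : Function.Injective χ)
    (hχτ : ∀ (τ : F ≃+* F) a, χ (τ a) = τ (χ a)) {C : Set (ι → F)}
    (hC : ∀ e, e ∈ autSSet C ↔ ∃ g ∈ semilinearGroup F K, ∃ π τ c, IsMonomialAction z g π τ c ∧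
      ∀ v i, e v i = χ (c i) * τ (v (π⁻¹ i))) :
    (∃ φ : semilinearGroup F K →* Equiv.Perm (ι → F), Function.Injective φ ∧
      Set.range φ = autSSet C) ∧
    Nat.card (autMSet C) = (Fintype.card F ^ 2 - 1) * (Fintype.card F ^ 2 - Fintype.card F) := by
  classical
  have : Nonempty ι := (hz.exists_eq 1 (map_one _)).nonempty
  have hχ0 : ∀ {a}, a ≠ 0 → χ a ≠ 0 := fun ha => by simpa using ha
  suffices H : ∃ φ : semilinearGroup F K →* Equiv.Perm (ι → F), Function.Injective φ ∧
      Set.range φ = autSSet C ∧ ∀ g, ∃ π τ c, IsMonomialAction z g.1 π τ c ∧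
        ∀ v i, φ g v i = χ (c i) * τ (v (π⁻¹ i)) by
    obtain ⟨φ, hφ, hrange, hR⟩ := H
    refine ⟨⟨φ, hφ, hrange⟩, ?_⟩
    have himage : autMSet C =
        φ '' {g : semilinearGroup F K | ∀ (r : F) (x : K), g.1 (r • x) = r • g.1 x} := by
      ext e
      constructor
      · rintro ⟨⟨π, c, hc, he⟩, heC⟩
        have hmem : e ∈ autSSet C := ⟨⟨π, RingEquiv.refl F, c, hc, he⟩, heC⟩
        rw [← hrange] at hmem
        obtain ⟨g, rfl⟩ := hmem
        obtain ⟨π', τ', c', hg, he'⟩ := hR g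
        obtain ⟨-, rfl, -⟩ := monomial_unique (τ := RingEquiv.refl F) hc
          fun v i => (he v i).symm.trans (he' v i)
        exact ⟨g, hg.map_smul, rfl⟩
      · rintro ⟨g, hlin, rfl⟩
        obtain ⟨π, τ, c, hg, he⟩ := hR g
        obtain ⟨-, rfl, -⟩ := hg.unique hz h
          { hg with map_smul := hlin : IsMonomialAction z g.1 π (RingEquiv.refl F) c }
        have hmem : φ g ∈ autSSet C := hrange ▸ ⟨g, rfl⟩
        exact ⟨⟨π, fun i => χ (c i), fun i => hχ0 (hg.coeff_ne_zero i), he⟩, hmem.2⟩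
    rw [himage, ← card_linear_semilinearGroup (F := F) (K := K) h]
    exact Nat.card_image_of_injective hφ _
  refine exists_monoidHom_of_rel (R := fun (g : semilinearGroup F K) (e : Equiv.Perm (ι → F)) => ∃ π τ c,
    IsMonomialAction z g.1 π τ c ∧ ∀ v i, e v i = χ (c i) * τ (v (π⁻¹ i))) ?_ ?_ ?_ ?_ ?_
  · rintro g g' e e' ⟨π, τ, c, hg, he⟩ ⟨π', τ', c', hg', he'⟩
    refine ⟨_, _, _, hg.mul hg', fun v i => ?_⟩
    simp [he, he', hχτ, mul_assoc]
  · intro g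
    obtain ⟨π, τ, c, hg⟩ := IsMonomialAction.exists_of_mem_semilinearGroup hz h g.2
    obtain ⟨e, he⟩ := exists_perm_of_monomial π τ (c := fun i => χ (c i))
      fun i => hχ0 (hg.coeff_ne_zero i)
    exact ⟨e, π, τ, c, hg, he⟩
  · rintro g e e' ⟨π, τ, c, hg, he⟩ ⟨π', τ', c', hg', he'⟩
    obtain ⟨rfl, rfl, rfl⟩ := hg.unique hz h hg'
    ext v i
    rw [he, he']
  · rintro g g' e ⟨π, τ, c, hg, he⟩ ⟨π', τ', c', hg', he'⟩
    obtain ⟨rfl, rfl, hcc⟩ := monomial_unique (fun i => hχ0 (hg.coeff_ne_zero i))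
      fun v i => (he v i).symm.trans (he' v i)
    obtain rfl : c = c' := funext fun i => hχ (congrFun hcc i)
    exact Subtype.ext (hg.perm_ext hz h hg')
  · intro e
    rw [hC]
    simp

theorem mem_autSSet_relationCode (hz : IsNormOneFamily F z)
    (h : Fintype.card K = Fintype.card F ^ 2) (e : Equiv.Perm (ι → F)) :
    e ∈ autSSet (relationCode F z : Set (ι → F)) ↔ ∃ g ∈ semilinearGroup F K, ∃ π τ c,
      IsMonomialAction z g π τ c ∧ ∀ v i, e v i = c i * τ (v (π⁻¹ i)) := by
  classical
  constructor
  · rintro ⟨⟨π, τ, c, hc, he⟩, heC⟩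
    obtain ⟨g, hg, hgz⟩ := hz.exists_mem_semilinearGroup_of_additive h
      (π := π) (σ := fun i a => c i * τ a) (fun i x y => by simp [mul_add])
      (fun i x y hxy => τ.injective (mul_left_cancel₀ (hc i) hxy)) he
      (fun v hv => heC.subset ⟨v, hv, rfl⟩)
    refine ⟨g, hg, π, τ, c, ⟨hc, fun r x => ?_, fun j => ?_⟩, he⟩
    · obtain ⟨j, s, rfl⟩ := hz.exists_smul_eq h x
      rw [smul_smul, hgz, hgz, smul_smul, map_mul, mul_left_comm]
    · simpa using hgz j 1
  · rintro ⟨g, hg, π, τ, c, hact, he⟩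
    exact ⟨⟨π, τ, c, hact.coeff_ne_zero, he⟩, image_eq_self_of_forall_mem e fun v hv =>
      hz.map_mem_relationCode h he hg hact.map_smul hact.map_family hv⟩

theorem mem_autSSet_evaluationCode (hz : IsNormOneFamily F z)
    (h : Fintype.card K = Fintype.card F ^ 2) (e : Equiv.Perm (ι → F)) :
    e ∈ autSSet (evaluationCode F z : Set (ι → F)) ↔ ∃ g ∈ semilinearGroup F K, ∃ π τ c,
      IsMonomialAction z g π τ c ∧ ∀ v i, e v i = (c i)⁻¹ * τ (v (π⁻¹ i)) := by
  constructor
  · rintro ⟨⟨π, τ, c, hc, he⟩, heC⟩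
    obtain ⟨e', he'⟩ := exists_perm_of_monomial π τ fun i => inv_ne_zero (hc i)
    have h1 : e' ∈ autSSet (relationCode F z : Set (ι → F)) := by
      rw [← dualSet_evaluationCode]
      exact ⟨⟨π, τ, _, fun i => inv_ne_zero (hc i), he'⟩,
        image_dualSet_of_contragredient (fun i => mul_inv_cancel₀ (hc i)) he he' heC⟩
    obtain ⟨g, hg, π', τ', c', hact, he''⟩ := (mem_autSSet_relationCode hz h e').mp h1
    have : Nonempty ι := (hz.exists_eq 1 (map_one _)).nonempty
    obtain ⟨rfl, rfl, rfl⟩ := monomial_unique (fun i => inv_ne_zero (hc i))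
      fun v i => (he' v i).symm.trans (he'' v i)
    exact ⟨g, hg, π, τ, _, hact, fun v i => by rw [he, inv_inv]⟩
  · rintro ⟨g, hg, π, τ, c, hact, he⟩
    have hc := hact.coeff_ne_zero
    obtain ⟨e', he'⟩ := exists_perm_of_monomial π τ hc
    have h1 := ((mem_autSSet_relationCode hz h e').mpr ⟨g, hg, π, τ, c, hact, he'⟩).2
    refine ⟨⟨π, τ, _, fun i => inv_ne_zero (hc i), he⟩, ?_⟩
    rw [← dualSet_relationCode]
    exact image_dualSet_of_contragredient (fun i => mul_inv_cancel₀ (hc i)) he' he h1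

theorem exists_monoidHom_autSSet_relationCode (hz : IsNormOneFamily F z)
    (h : Fintype.card K = Fintype.card F ^ 2) :
    (∃ φ : semilinearGroup F K →* Equiv.Perm (ι → F), Function.Injective φ ∧
      Set.range φ = autSSet (relationCode F z : Set (ι → F))) ∧
    Nat.card (autMSet (relationCode F z : Set (ι → F))) =
      (Fintype.card F ^ 2 - 1) * (Fintype.card F ^ 2 - Fintype.card F) :=
  exists_monoidHom_autSSet hz h (χ := MonoidWithZeroHom.id F) Function.injective_id
    (fun _ _ => rfl) (mem_autSSet_relationCode hz h)

theorem exists_monoidHom_autSSet_evaluationCode (hz : IsNormOneFamily F z)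
    (h : Fintype.card K = Fintype.card F ^ 2) :
    (∃ φ : semilinearGroup F K →* Equiv.Perm (ι → F), Function.Injective φ ∧
      Set.range φ = autSSet (evaluationCode F z : Set (ι → F))) ∧
    Nat.card (autMSet (evaluationCode F z : Set (ι → F))) =
      (Fintype.card F ^ 2 - 1) * (Fintype.card F ^ 2 - Fintype.card F) :=
  exists_monoidHom_autSSet hz h (χ := invMonoidWithZeroHom) inv_injective
    (fun τ a => (map_inv₀ τ a).symm) (mem_autSSet_evaluationCode hz h)

end MonomialAction

section Additivity

variable {F : Type*} [Field F] {ι : Type*}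

theorem map_add_of_words {C : Submodule F (ι → F)} {e : (ι → F) → ι → F} {π : Equiv.Perm ι}
    {σ : ι → F → F} (h0 : ∀ i, σ i 0 = 0) (he : ∀ v i, e v i = σ i (v (π⁻¹ i)))
    (heC : ∀ v ∈ C, e v ∈ C) (i : ι) {v w : ι → F} (hv : v ∈ C) (hw : w ∈ C)
    (hd : ∀ d ∈ C, (∀ j, v j = 0 ∨ w j = 0 → d (π j) = 0) → d = 0) :
    σ (π i) (v i + w i) = σ (π i) (v i) + σ (π i) (w i) := by
  have hd' := hd (e (v + w) - e v - e w)
    (C.sub_mem (C.sub_mem (heC _ (C.add_mem hv hw)) (heC _ hv)) (heC _ hw)) (by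
      rintro j (hj | hj) <;> simp [he, hj, h0])
  have hπ : π⁻¹ (π i) = i := by simp
  have := congrFun hd' (π i)
  simp only [Pi.sub_apply, he, Pi.add_apply, hπ, Pi.zero_apply] at this
  linear_combination this

theorem map_add_of_card_eq_two [Fintype F] [CharP F 2] (hF : Fintype.card F = 2) {σ : F → F}
    (h0 : σ 0 = 0) (x y : F) : σ (x + y) = σ x + σ y := by
  by_cases hx : x = 0
  · simp [hx, h0]
  by_cases hy : y = 0
  · simp [hy, h0]
  have hxy : x = y := by
    by_contra hne
    exact hF.not_gt (Fintype.two_lt_card_iff.mpr ⟨x, y, 0, hne, hx, hy⟩)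
  rw [hxy, CharTwo.add_self_eq_zero, CharTwo.add_self_eq_zero, h0]

theorem exists_embedding_fin_five [Fintype ι] (hι : 5 ≤ Fintype.card ι) (i : ι) :
    ∃ f : Fin 5 ↪ ι, f 0 = i := by
  classical
  obtain ⟨f⟩ := Function.Embedding.nonempty_of_card_le (α := Fin 5) (β := ι) (by simpa using hι)
  exact ⟨f.trans (Equiv.swap (f 0) i).toEmbedding, by simp⟩

end Additivity

section ZeroFixing

variable {F K : Type*} [Field F] [Field K] [Algebra F K] [Fintype F] [Fintype K] [CharP F 2]
  {ι : Type*} [Fintype ι] {z : ι → K}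

namespace IsNormOneFamily

theorem coeff_eq_zero_of_three_zeros (hz : IsNormOneFamily F z)
    (h : Fintype.card K = Fintype.card F ^ 2) {c : F} {δ : K} {i j k : ι} (hij : i ≠ j)
    (hik : i ≠ k) (hjk : j ≠ k) (hi : c + Algebra.trace F K (δ * z i) = 0)
    (hj : c + Algebra.trace F K (δ * z j) = 0) (hk : c + Algebra.trace F K (δ * z k) = 0) :
    c = 0 ∧ δ = 0 := by
  have hu : ∀ x, Algebra.trace F K (δ * x) =
      normPolar x (FiniteField.frobeniusAlgHom F K δ) := fun x => by
    rw [normPolar, frobenius_frobenius h, mul_comm]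
  by_cases hδ : δ = 0
  · exact ⟨by simpa [hδ] using hi, hδ⟩
  · exfalso
    have hu0 : FiniteField.frobeniusAlgHom F K δ ≠ 0 := by simpa using hδ
    rw [hu] at hi hj hk
    generalize FiniteField.frobeniusAlgHom F K δ = u at *
    have key : ∀ l, i ≠ l → c + normPolar (z l) u = 0 → ∃ r : F, r * Algebra.norm F u = normPolar (z i) u ∧
        z l = z i + r • u := by
      intro l hil hl
      have h1 : normPolar (F := F) u (z l + z i) = 0 := by
        rw [normPolar_comm h, normPolar_add_left]
        linear_combination hl + hi - CharTwo.add_self_eq_zero c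
      obtain ⟨r, hr⟩ := exists_smul_of_normPolar_eq_zero h hu0 h1
      have : CharP K 2 := charP_of_injective_algebraMap (algebraMap F K).injective 2
      have hl' : z l = z i + r • u := by
        rw [← hr]
        linear_combination - CharTwo.add_self_eq_zero (z i)
      have hr0 : r ≠ 0 := by
        rintro rfl
        exact hil (hz.injective (by simpa using hl'.symm))
      refine ⟨r, ?_, hl'⟩
      have h2 := hz.norm_eq_one l
      rw [hl', norm_add_quadratic h, norm_smul_quadratic h, hz.norm_eq_one,
        normPolar_smul_right] at h2
      refine mul_left_cancel₀ hr0 ?_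
      linear_combination h2 - CharTwo.add_self_eq_zero (r * normPolar (z i) u)
    obtain ⟨r, hr, hr'⟩ := key j hij hj
    obtain ⟨s, hs, hs'⟩ := key k hik hk
    have hN : Algebra.norm F u ≠ 0 := by rwa [Ne, Algebra.norm_eq_zero_iff]
    obtain rfl : r = s := mul_right_cancel₀ hN (hr.trans hs.symm)
    exact hjk (hz.injective (hr'.trans hs'.symm))

theorem eq_zero_of_mem_evaluationCode (hz : IsNormOneFamily F z)
    (h : Fintype.card K = Fintype.card F ^ 2) {w : ι → F} (hw : w ∈ evaluationCode F z)
    {i j k : ι} (hij : i ≠ j) (hik : i ≠ k) (hjk : j ≠ k) (hi : w i = 0) (hj : w j = 0)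
    (hk : w k = 0) : w = 0 := by
  obtain ⟨c, δ, hw⟩ := hw
  rw [hw] at hi hj hk
  obtain ⟨rfl, rfl⟩ := hz.coeff_eq_zero_of_three_zeros h hij hik hjk hi hj hk
  ext l
  simp [hw]

theorem exists_mem_evaluationCode (hz : IsNormOneFamily F z)
    (h : Fintype.card K = Fintype.card F ^ 2) {i j k : ι} (hij : i ≠ j) (hik : i ≠ k)
    (hjk : j ≠ k) (a : F) : ∃ w ∈ evaluationCode F z, w i = a ∧ w j = 0 ∧ w k = 0 := by
  have : CharP K 2 := charP_of_injective_algebraMap (algebraMap F K).injective 2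
  let w : ι → F := fun l => normPolar (z j) (z k) +
    Algebra.trace F K (FiniteField.frobeniusAlgHom F K (z j + z k) * z l)
  have hw : ∀ l, w l = normPolar (z j) (z k) + normPolar (z l) (z j + z k) := fun l => by
    simp only [w, normPolar, mul_comm (z l)]
  have hj : w j = 0 := by
    rw [hw, normPolar_add_right, normPolar_self h, zero_add, CharTwo.add_self_eq_zero]
  have hk : w k = 0 := by
    rw [hw, normPolar_add_right, normPolar_self h, add_zero, normPolar_comm h (z k),
      CharTwo.add_self_eq_zero]
  have hi : w i ≠ 0 := fun hi => hz.normPolar_ne_zero h hjk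
    (hz.coeff_eq_zero_of_three_zeros h hij hik hjk hi hj hk).1
  exact ⟨(a / w i) • w, Submodule.smul_mem _ _ ⟨_, _, fun _ => rfl⟩, by simp [hi], by simp [hj],
    by simp [hk]⟩

theorem eq_zero_of_mem_relationCode (hz : IsNormOneFamily F z)
    (h : Fintype.card K = Fintype.card F ^ 2) {v : ι → F} (hv : v ∈ relationCode F z)
    {i j k : ι} (hij : i ≠ j) (hik : i ≠ k) (hjk : j ≠ k)
    (hs : ∀ l, l ≠ i → l ≠ j → l ≠ k → v l = 0) : v = 0 := by
  have hdual : v ∈ dualSet (evaluationCode F z : Set (ι → F)) := by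
    rw [dualSet_evaluationCode]
    exact hv
  have key : ∀ i j k : ι, i ≠ j → i ≠ k → j ≠ k →
      (∀ l, l ≠ i → l ≠ j → l ≠ k → v l = 0) → v i = 0 := by
    intro i j k hij hik hjk hs
    obtain ⟨w, hw, hi, hj, hk⟩ := hz.exists_mem_evaluationCode h hij hik hjk 1
    have h1 := hdual w hw
    rw [Fintype.sum_eq_single i, hi, one_mul] at h1
    · exact h1
    · intro l hl
      by_cases hlj : l = j
      · rw [hlj, hj, zero_mul]
      by_cases hlk : l = k
      · rw [hlk, hk, zero_mul]
      rw [hs l hl hlj hlk, mul_zero]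
  ext l
  by_cases hi : l = i
  · exact hi ▸ key i j k hij hik hjk hs
  by_cases hj : l = j
  · exact hj ▸ key j i k hij.symm hjk hik fun l h1 h2 => hs l h2 h1
  by_cases hk : l = k
  · exact hk ▸ key k i j hik.symm hjk.symm hij fun l h1 h2 h3 => hs l h2 h3 h1
  exact hs l hi hj hk

theorem exists_mem_relationCode (hz : IsNormOneFamily F z)
    (h : Fintype.card K = Fintype.card F ^ 2) {f : Fin 4 → ι} (hf : Function.Injective f) (a : F) :
    ∃ v ∈ relationCode F z, v (f 0) = a ∧ ∀ l, l ∉ Set.range f → v l = 0 := by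
  let Ψ : (Fin 4 → F) →ₗ[F] F × K :=
    (∑ k, LinearMap.proj k).prod (∑ k, (LinearMap.proj k).smulRight (z (f k)))
  have hker : LinearMap.ker Ψ ≠ ⊥ := LinearMap.ker_ne_bot_of_finrank_lt (by
    rw [Module.finrank_prod, Module.finrank_self, finrank_of_card_eq_sq h]
    simp)
  obtain ⟨s, hs, hs0⟩ := Submodule.exists_mem_ne_zero_of_ne_bot hker
  rw [LinearMap.mem_ker] at hs
  have h1 : ∑ k, s k = 0 := by simpa [Ψ] using congrArg Prod.fst hs
  have h2 : ∑ k, s k • z (f k) = 0 := by simpa [Ψ] using congrArg Prod.snd hs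
  let v : ι → F := Function.extend f s 0
  have hvf : ∀ k, v (f k) = s k := fun k => hf.extend_apply s 0 k
  have hv0 : ∀ l, l ∉ Set.range f → v l = 0 := fun l hl =>
    Function.extend_apply' s (0 : ι → F) l hl
  have hv : v ∈ relationCode F z := by
    constructor
    · rw [← h1]
      exact (Fintype.sum_of_injective f hf _ _ hv0 fun k => (hvf k).symm).symm
    · rw [← h2]
      exact (Fintype.sum_of_injective f hf _ _ (fun l hl => by rw [hv0 l hl, zero_smul])
        fun k => by rw [hvf]).symm
  have hs' : s 0 ≠ 0 := by
    intro h0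
    have hv' := hz.eq_zero_of_mem_relationCode h hv (i := f 1) (j := f 2) (k := f 3)
      (hf.ne (by decide)) (hf.ne (by decide)) (hf.ne (by decide)) (fun l l1 l2 l3 => by
        by_cases hl : l ∈ Set.range f
        · obtain ⟨k, rfl⟩ := hl
          fin_cases k
          · exact (hvf 0).trans h0
          · exact absurd rfl l1
          · exact absurd rfl l2
          · exact absurd rfl l3
        · exact hv0 l hl)
    exact hs0 (funext fun k => by rw [← hvf, hv']; rfl)
  exact ⟨(a / s 0) • v, Submodule.smul_mem _ _ hv, by simp [hvf, hs'], fun l hl => by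
    simp [hv0 l hl]⟩

theorem map_add_of_map_mem_evaluationCode (hz : IsNormOneFamily F z)
    (h : Fintype.card K = Fintype.card F ^ 2) (hι : Fintype.card F = 2 ∨ 5 ≤ Fintype.card ι)
    {e : (ι → F) → ι → F} {π : Equiv.Perm ι} {σ : ι → F → F} (h0 : ∀ i, σ i 0 = 0)
    (he : ∀ v i, e v i = σ i (v (π⁻¹ i)))
    (heC : ∀ v ∈ evaluationCode F z, e v ∈ evaluationCode F z) (i : ι) (x y : F) :
    σ i (x + y) = σ i x + σ i y := by
  rcases hι with hF | hι
  · exact map_add_of_card_eq_two hF (h0 i) x y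
  obtain ⟨i, rfl⟩ := π.surjective i
  obtain ⟨f, rfl⟩ := exists_embedding_fin_five hι i
  have hf : ∀ {a b}, a ≠ b → f a ≠ f b := fun hab => f.injective.ne hab
  obtain ⟨v, hv, rfl, hv2, hv3⟩ := hz.exists_mem_evaluationCode h (i := f 0) (j := f 2) (k := f 3)
    (hf (by decide)) (hf (by decide)) (hf (by decide)) x
  obtain ⟨w, hw, rfl, hw1, hw3⟩ := hz.exists_mem_evaluationCode h (i := f 0) (j := f 1) (k := f 3)
    (hf (by decide)) (hf (by decide)) (hf (by decide)) y
  refine map_add_of_words h0 he heC (f 0) hv hw fun d hd hd0 => ?_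
  exact hz.eq_zero_of_mem_evaluationCode h hd (i := π (f 1)) (j := π (f 2)) (k := π (f 3))
    (π.injective.ne (hf (by decide))) (π.injective.ne (hf (by decide)))
    (π.injective.ne (hf (by decide))) (hd0 _ (Or.inr hw1)) (hd0 _ (Or.inl hv2))
    (hd0 _ (Or.inl hv3))

theorem map_add_of_map_mem_relationCode (hz : IsNormOneFamily F z)
    (h : Fintype.card K = Fintype.card F ^ 2) (hι : Fintype.card F = 2 ∨ 5 ≤ Fintype.card ι)
    {e : (ι → F) → ι → F} {π : Equiv.Perm ι} {σ : ι → F → F} (h0 : ∀ i, σ i 0 = 0)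
    (he : ∀ v i, e v i = σ i (v (π⁻¹ i)))
    (heC : ∀ v ∈ relationCode F z, e v ∈ relationCode F z) (i : ι) (x y : F) :
    σ i (x + y) = σ i x + σ i y := by
  rcases hι with hF | hι
  · exact map_add_of_card_eq_two hF (h0 i) x y
  obtain ⟨i, rfl⟩ := π.surjective i
  obtain ⟨f, rfl⟩ := exists_embedding_fin_five hι i
  have hf : ∀ {a b}, a ≠ b → f a ≠ f b := fun hab => f.injective.ne hab
  obtain ⟨v, hv, hvx, hv'⟩ := hz.exists_mem_relationCode h (f := f ∘ Fin.succAbove 4)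
    (f.injective.comp Fin.succAbove_right_injective) x
  obtain ⟨w, hw, hwy, hw'⟩ := hz.exists_mem_relationCode h (f := f ∘ Fin.succAbove 3)
    (f.injective.comp Fin.succAbove_right_injective) y
  obtain rfl : v (f 0) = x := hvx
  obtain rfl : w (f 0) = y := hwy
  refine map_add_of_words h0 he heC (f 0) hv hw fun d hd hd0 => ?_
  refine hz.eq_zero_of_mem_relationCode h hd (i := π (f 0)) (j := π (f 1)) (k := π (f 2))
    (π.injective.ne (hf (by decide))) (π.injective.ne (hf (by decide)))
    (π.injective.ne (hf (by decide))) fun l l0 l1 l2 => ?_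
  obtain ⟨l, rfl⟩ := π.surjective l
  refine hd0 l ?_
  by_contra! hne
  have hl4 : l ∈ Set.range (f ∘ Fin.succAbove 4) := by_contra fun hl => hne.1 (hv' l hl)
  have hl3 : l ∈ Set.range (f ∘ Fin.succAbove 3) := by_contra fun hl => hne.2 (hw' l hl)
  obtain ⟨a, rfl⟩ := hl4
  obtain ⟨b, hb⟩ := hl3
  have hab := f.injective hb
  fin_cases a
  · exact l0 rfl
  · exact l1 rfl
  · exact l2 rfl
  · exact Fin.succAbove_ne 3 b hab

end IsNormOneFamily

end ZeroFixing

section Adjoint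

variable {F : Type*} [Field F] [Fintype F] [Algebra (ZMod 2) F]

theorem trace_ringEquiv (τ : F ≃+* F) (a : F) :
    Algebra.trace (ZMod 2) F (τ a) = Algebra.trace (ZMod 2) F a :=
  Algebra.trace_eq_of_algEquiv (AlgEquiv.ofRingEquiv (f := τ) fun r => DFunLike.congr_fun
    (Subsingleton.elim ((τ : F →+* F).comp (algebraMap (ZMod 2) F)) (algebraMap (ZMod 2) F)) r) a

theorem exists_trace_adjoint {s : Equiv.Perm F} (hs : ∀ x y, s (x + y) = s x + s y) :
    ∃ t : F → F, (∀ x y, t (x + y) = t x + t y) ∧ Function.Injective t ∧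
      ∀ x y, Algebra.trace (ZMod 2) F (s x * t y) = Algebra.trace (ZMod 2) F (x * y) := by
  let S : F →ₗ[ZMod 2] F := AddMonoidHom.toZModLinearMap 2
    (AddEquiv.symm { s with map_add' := hs }).toAddMonoidHom
  have hS : ∀ x, S (s x) = x := fun x => s.symm_apply_apply x
  have hB : (Algebra.traceForm (ZMod 2) F).Nondegenerate := traceForm_nondegenerate _ _
  let ψ := LinearMap.BilinForm.leftAdjointOfNondegenerate _ hB S
  have hψ : ∀ x y, Algebra.trace (ZMod 2) F (s x * ψ y) = Algebra.trace (ZMod 2) F (x * y) := by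
    intro x y
    have h1 := LinearMap.BilinForm.isAdjointPairLeftAdjointOfNondegenerate _ hB S y (s x)
    rw [hS, Algebra.traceForm_apply, Algebra.traceForm_apply] at h1
    rw [mul_comm, mul_comm x]
    exact h1
  refine ⟨ψ, map_add ψ, fun y y' hyy => ?_, hψ⟩
  rw [← sub_eq_zero]
  refine eq_zero_of_forall_trace_mul_eq_zero (F := ZMod 2) fun x => ?_
  rw [mul_sub, map_sub, ← hψ x y, ← hψ x y', hyy, sub_self]

end Adjoint

section ZeroFixingSemilinear

variable {F K : Type*} [Field F] [Field K] [Algebra F K] [Fintype F] [Fintype K] [CharP F 2]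
  {ι : Type*} [Fintype ι] {z : ι → K}

namespace IsNormOneFamily

theorem exists_semilinear_of_additive (hz : IsNormOneFamily F z)
    (h : Fintype.card K = Fintype.card F ^ 2) {π : Equiv.Perm ι} {σ : ι → F → F}
    (hadd : ∀ i x y, σ i (x + y) = σ i x + σ i y) (hinj : ∀ i, Function.Injective (σ i))
    {e : (ι → F) → ι → F} (he : ∀ v i, e v i = σ i (v (π⁻¹ i)))
    (hC : ∀ v ∈ relationCode F z, e v ∈ relationCode F z) :
    ∃ (τ : F ≃+* F) (c : ι → F), (∀ i, c i ≠ 0) ∧ ∀ i a, σ i a = c i * τ a := by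
  classical
  obtain ⟨g, ⟨-, τ, hτ⟩, hg⟩ := hz.exists_mem_semilinearGroup_of_additive h hadd hinj he hC
  refine ⟨τ, fun i => σ i 1, fun i hi => ?_, fun i a => ?_⟩
  · have h0 : σ i 0 = 0 := by simpa using hadd i 0 0
    exact one_ne_zero (hinj i (hi.trans h0.symm))
  · obtain ⟨j, rfl⟩ := π.surjective i
    have h1 := hg j (a • 1)
    rw [smul_assoc, hτ, hg, smul_smul, smul_eq_mul, mul_one] at h1
    rw [mul_comm]
    exact (smul_left_injective F (hz.ne_zero _) h1).symm

theorem aut0Set_relationCode (hz : IsNormOneFamily F z)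
    (h : Fintype.card K = Fintype.card F ^ 2) (hι : Fintype.card F = 2 ∨ 5 ≤ Fintype.card ι) :
    aut0Set (relationCode F z : Set (ι → F)) = autSSet (relationCode F z : Set (ι → F)) := by
  refine (autSSet_subset_aut0Set _).antisymm' ?_
  rintro e ⟨⟨π, σ, h0, he⟩, hC⟩
  have hmem : ∀ v ∈ relationCode F z, e v ∈ relationCode F z := fun v hv => hC.subset ⟨v, hv, rfl⟩
  obtain ⟨τ, c, hc, hσ⟩ := hz.exists_semilinear_of_additive h
    (hz.map_add_of_map_mem_relationCode h hι h0 he hmem) (fun i => (σ i).injective) he hmem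
  exact ⟨⟨π, τ, c, hc, fun v i => by rw [he, hσ]⟩, hC⟩

theorem aut0Set_evaluationCode [Algebra (ZMod 2) F] (hz : IsNormOneFamily F z)
    (h : Fintype.card K = Fintype.card F ^ 2) (hι : Fintype.card F = 2 ∨ 5 ≤ Fintype.card ι) :
    aut0Set (evaluationCode F z : Set (ι → F)) = autSSet (evaluationCode F z : Set (ι → F)) := by
  refine (autSSet_subset_aut0Set _).antisymm' ?_
  rintro e ⟨⟨π, σ, h0, he⟩, hC⟩
  choose t htadd htinj ht using fun i => exists_trace_adjoint
    (hz.map_add_of_map_mem_evaluationCode h hι h0 he (fun v hv => hC.subset ⟨v, hv, rfl⟩) i)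
  obtain ⟨τ, c, hc, hct⟩ := hz.exists_semilinear_of_additive h htadd htinj
    (e := fun v i => t i (v (π⁻¹ i))) (fun _ _ => rfl) (fun v hv => by
      rw [← SetLike.mem_coe, ← dualSet_evaluationCode] at hv ⊢
      intro w hw
      refine eq_zero_of_forall_trace_mul_eq_zero (F := ZMod 2) fun r => ?_
      have hrw : r • w ∈ evaluationCode F z := Submodule.smul_mem _ r hw
      obtain ⟨u, hu, hur⟩ := hC.superset hrw
      have h1 : ∀ i, Algebra.trace (ZMod 2) F (r * (w i * t i (v (π⁻¹ i)))) =
          Algebra.trace (ZMod 2) F (u (π⁻¹ i) * v (π⁻¹ i)) := fun i => by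
        rw [← ht i (u _), ← he, hur, Pi.smul_apply, smul_eq_mul, mul_assoc]
      simp only [Finset.mul_sum, map_sum, h1]
      rw [Equiv.sum_comp π⁻¹ fun i => Algebra.trace (ZMod 2) F (u i * v i), ← map_sum, hv u hu,
        map_zero])
  have hσ : ∀ i a, σ i a = (c i)⁻¹ * τ a := by
    intro i a
    have h1 : c i * σ i a - τ a = 0 := by
      refine eq_zero_of_forall_trace_mul_eq_zero (F := ZMod 2) fun r => ?_
      have h2 := ht i a (τ.symm r)
      rw [hct, RingEquiv.apply_symm_apply, ← trace_ringEquiv τ (a * _), map_mul τ,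
        RingEquiv.apply_symm_apply] at h2
      rw [mul_sub, map_sub, mul_comm r (τ a), ← h2, sub_eq_zero]
      congr 1
      ring
    rw [eq_inv_mul_iff_mul_eq₀ (hc i), ← sub_eq_zero, h1]
  exact ⟨⟨π, τ, _, fun i => inv_ne_zero (hc i), fun v i => by rw [he, hσ]⟩, hC⟩

end IsNormOneFamily

end ZeroFixingSemilinear

section Kasami

variable {F K : Type*} [Field F] [Field K] [Algebra (ZMod 2) F] [Algebra (ZMod 2) K] [Algebra F K]
  {κ : Type*} [Fintype κ]

/-- The sums of an `F₂`-linear form on `K` and an `F₂`-linear form of the norm, evaluated at the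
elements `a l`. -/
noncomputable def normFormCode (F : Type*) {K κ : Type*} [Field F] [Field K] [Algebra (ZMod 2) F]
    [Algebra (ZMod 2) K] [Algebra F K] (a : κ → K) : Submodule (ZMod 2) (κ → ZMod 2) where
  carrier := {w | ∃ (c : F) (δ : K), ∀ l, w l = Algebra.trace (ZMod 2) K (δ * a l) +
    Algebra.trace (ZMod 2) F (c * Algebra.norm F (a l))}
  add_mem' := by
    rintro v w ⟨c, δ, h⟩ ⟨c', δ', h'⟩
    refine ⟨c + c', δ + δ', fun l => ?_⟩
    rw [Pi.add_apply, h, h', add_mul, add_mul, map_add, map_add]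
    ring
  zero_mem' := ⟨0, 0, by simp⟩
  smul_mem' := by
    rintro r v ⟨c, δ, h⟩
    refine ⟨r • c, r • δ, fun l => ?_⟩
    rw [Pi.smul_apply, h, smul_mul_assoc, smul_mul_assoc, map_smul, map_smul, smul_add]

variable [Fintype F] [Fintype K]

theorem mem_dualSet_normFormCode {a : κ → K} {v : κ → ZMod 2} :
    v ∈ dualSet (normFormCode F a : Set (κ → ZMod 2)) ↔
      ∑ l, v l • Algebra.norm F (a l) = 0 ∧ ∑ l, v l • a l = 0 := by
  have key : ∀ (c : F) (δ : K), ∑ l, (Algebra.trace (ZMod 2) K (δ * a l) +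
      Algebra.trace (ZMod 2) F (c * Algebra.norm F (a l))) * v l =
      Algebra.trace (ZMod 2) K (δ * ∑ l, v l • a l) +
        Algebra.trace (ZMod 2) F (c * ∑ l, v l • Algebra.norm F (a l)) := by
    intro c δ
    simp only [add_mul, Finset.sum_add_distrib, Finset.mul_sum, map_sum, mul_smul_comm, map_smul,
      smul_eq_mul]
    simp only [mul_comm]
  constructor
  · intro hv
    have h1 : ∀ (c : F) (δ : K), Algebra.trace (ZMod 2) K (δ * ∑ l, v l • a l) +
        Algebra.trace (ZMod 2) F (c * ∑ l, v l • Algebra.norm F (a l)) = 0 := fun c δ => by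
      rw [← key]
      exact hv (fun l => _) ⟨c, δ, fun l => rfl⟩
    exact ⟨eq_zero_of_forall_trace_mul_eq_zero (F := ZMod 2) fun c => by simpa using h1 c 0,
      eq_zero_of_forall_trace_mul_eq_zero (F := ZMod 2) fun δ => by simpa using h1 0 δ⟩
  · rintro ⟨h1, h2⟩ w ⟨c, δ, hw⟩
    simp only [hw, key, h1, h2, mul_zero, map_zero, add_zero]

theorem exists_addMonoidHom_ker_eq_dualSet (h : Fintype.card K = Fintype.card F ^ 2) {a : κ → K}
    (ha : Function.Injective a) (hrange : Set.range a = {0}ᶜ) :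
    ∃ (L : (κ → ZMod 2) →+ F × K) (T : K → κ → ZMod 2),
      (∀ v, L v = 0 ↔ v ∈ dualSet (normFormCode F a : Set (κ → ZMod 2))) ∧
      (∀ x, L (T x) = (Algebra.norm F x, x)) ∧ T 0 = 0 ∧
      (∀ (π : Equiv.Perm κ) l, T (a l) ∘ ⇑π⁻¹ = T (a (π l))) ∧
      AddSubmonoid.closure (Set.range T) = ⊤ := by
  classical
  have h0 : ¬∃ l, a l = 0 := fun h0 => by
    have : (0 : K) ∈ Set.range a := h0
    rw [hrange] at this
    exact this rfl
  let T : K → κ → ZMod 2 := Function.extend a (fun l => Pi.single l 1) 0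
  have hT : ∀ l, T (a l) = Pi.single l 1 := ha.extend_apply _ _
  have hT0 : T 0 = 0 := Function.extend_apply' _ _ _ h0
  refine ⟨AddMonoidHom.mk' (fun v => (∑ l, v l • Algebra.norm F (a l), ∑ l, v l • a l))
    fun v w => ?_, T, fun v => ?_, fun x => ?_, hT0, fun π l => ?_, ?_⟩
  · simp [add_smul, Finset.sum_add_distrib]
  · simp [mem_dualSet_normFormCode, Prod.ext_iff]
  · by_cases hx : x = 0
    · have : Nontrivial K := inferInstance
      have : Module.finrank F K = 2 := finrank_of_card_eq_sq h
      ext <;> simp [hx, hT0, Algebra.norm_zero]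
    · obtain ⟨l, rfl⟩ : x ∈ Set.range a := hrange ▸ hx
      rw [hT]
      ext <;> simp [Pi.single_apply]
  · rw [hT, hT]
    ext i
    by_cases hi : i = π l
    · simp [hi]
    · rw [Function.comp_apply, Pi.single_eq_of_ne hi, Pi.single_eq_of_ne fun h1 => hi (by
        rw [← h1]; simp)]
  · rw [eq_top_iff]
    intro w _
    rw [← Finset.univ_sum_single w]
    refine sum_mem fun l _ => ?_
    have h2 : ∀ b : ZMod 2, b = 0 ∨ b = 1 := by decide
    rcases h2 (w l) with hw | hw
    · rw [hw, Pi.single_zero]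
      exact zero_mem _
    · rw [hw, ← hT]
      exact AddSubmonoid.subset_closure ⟨_, rfl⟩

theorem mem_aut0Set_dualSet_normFormCode [CharP F 2] (h : Fintype.card K = Fintype.card F ^ 2)
    {a : κ → K} (ha : Function.Injective a) (hrange : Set.range a = {0}ᶜ)
    (e : Equiv.Perm (κ → ZMod 2)) :
    e ∈ aut0Set (dualSet (normFormCode F a : Set (κ → ZMod 2))) ↔
      ∃ g ∈ semilinearGroup F K, ∃ π : Equiv.Perm κ,
        (∀ v i, e v i = v (π⁻¹ i)) ∧ ∀ l, g (a l) = a (π l) := by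
  obtain ⟨L, T, hker, hT, hT0, hTπ, hgen⟩ := exists_addMonoidHom_ker_eq_dualSet (F := F) h ha hrange
  have hcases : ∀ x : K, x = 0 ∨ ∃ l, a l = x := fun x =>
    or_iff_not_imp_left.mpr fun hx => (hrange ▸ hx : x ∈ Set.range a)
  have hne : ∀ l, a l ≠ 0 := fun l => by
    have : a l ∈ ({0}ᶜ : Set K) := hrange ▸ ⟨l, rfl⟩
    exact this
  have hadd : ∀ π : Equiv.Perm κ, (∀ v i, e v i = v (π⁻¹ i)) → ∀ v w, e (v + w) = e v + e w := by
    intro π he v w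
    ext i
    simp [he]
  rw [aut0Set_zmod_two]
  constructor
  · rintro ⟨⟨π, he⟩, hC⟩
    let ρ : K → K := Function.extend a (a ∘ π) 0
    have hρ : ∀ l, ρ (a l) = a (π l) := ha.extend_apply _ _
    have hρ0 : ρ 0 = 0 := Function.extend_apply' _ _ _ fun ⟨l, hl⟩ => hne l hl
    obtain ⟨g, hg, hgρ⟩ := mem_semilinearGroup_of_map_ker h L (AddMonoidHom.mk' e (hadd π he))
      (T := T) (ρ := ρ) (fun x y hxy => by
        rcases hcases x with rfl | ⟨l, rfl⟩ <;> rcases hcases y with rfl | ⟨k, rfl⟩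
        · rfl
        · rw [hρ0, hρ] at hxy
          exact absurd hxy.symm (hne _)
        · rw [hρ0, hρ] at hxy
          exact absurd hxy (hne _)
        · rw [hρ, hρ] at hxy
          rw [π.injective (ha hxy)]) hT (fun x => by
        change e (T x) = _
        rcases hcases x with rfl | ⟨l, rfl⟩
        · ext i
          rw [he, hρ0, hT0]
          rfl
        · rw [hρ, ← hTπ π l]
          exact funext (he _))
      (fun w hw => (hker _).mpr (hC.subset ⟨w, (hker w).mp hw, rfl⟩))
    exact ⟨g, hg, π, he, fun l => (hgρ _).trans (hρ l)⟩
  · rintro ⟨g, hg, π, he, hgπ⟩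
    refine ⟨⟨π, he⟩, image_eq_self_of_forall_mem e fun v hv => (hker _).mp ?_⟩
    refine map_ker_of_mem_semilinearGroup h L (AddMonoidHom.mk' e (hadd π he)) hg hT (fun x => ?_)
      hgen ((hker v).mpr hv)
    change e (T x) = _
    rcases hcases x with rfl | ⟨l, rfl⟩
    · have hg0 : g 0 = 0 := by simpa using hg.1 0 0
      ext i
      rw [he, hg0, hT0]
      rfl
    · rw [hgπ, ← hTπ π l]
      exact funext (he _)

theorem exists_monoidHom_aut0Set_normFormCode [CharP F 2]
    (h : Fintype.card K = Fintype.card F ^ 2) {a : κ → K} (ha : Function.Injective a)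
    (hrange : Set.range a = {0}ᶜ) :
    ∃ φ : semilinearGroup F K →* Equiv.Perm (κ → ZMod 2), Function.Injective φ ∧
      Set.range φ = aut0Set (dualSet (normFormCode F a : Set (κ → ZMod 2))) := by
  classical
  have hcases : ∀ x : K, x = 0 ∨ ∃ l, a l = x := fun x =>
    or_iff_not_imp_left.mpr fun hx => (hrange ▸ hx : x ∈ Set.range a)
  have hne : ∀ l, a l ≠ 0 := fun l => by
    have : a l ∈ ({0}ᶜ : Set K) := hrange ▸ ⟨l, rfl⟩
    exact this
  have hg0 : ∀ g : semilinearGroup F K, g.1 0 = 0 := fun g => by simpa using g.2.1 0 0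
  suffices H : ∃ φ : semilinearGroup F K →* Equiv.Perm (κ → ZMod 2), Function.Injective φ ∧
      Set.range φ = aut0Set (dualSet (normFormCode F a : Set (κ → ZMod 2))) ∧
      ∀ g, ∃ π : Equiv.Perm κ, (∀ v i, φ g v i = v (π⁻¹ i)) ∧ ∀ l, g.1 (a l) = a (π l) by
    obtain ⟨φ, hφ, hr, -⟩ := H
    exact ⟨φ, hφ, hr⟩
  refine exists_monoidHom_of_rel (R := fun (g : semilinearGroup F K)
    (e : Equiv.Perm (κ → ZMod 2)) => ∃ π : Equiv.Perm κ,
      (∀ v i, e v i = v (π⁻¹ i)) ∧ ∀ l, g.1 (a l) = a (π l)) ?_ ?_ ?_ ?_ ?_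
  · rintro g g' e e' ⟨π, he, hg⟩ ⟨π', he', hg'⟩
    exact ⟨π * π', fun v i => by simp [he, he'], fun l => by simp [hg, hg']⟩
  · intro g
    have hmem : ∀ l, ∃ k, g.1 (a l) = a k := fun l => by
      obtain h1 | ⟨k, hk⟩ := hcases (g.1 (a l))
      · exact absurd (g.1.injective (h1.trans (hg0 g).symm)) (hne l)
      · exact ⟨k, hk.symm⟩
    choose p hp using hmem
    have hpi : Function.Injective p := fun l k hlk =>
      ha (g.1.injective (by rw [hp, hp, hlk]))
    let π : Equiv.Perm κ := Equiv.ofBijective p (Finite.injective_iff_bijective.mp hpi)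
    exact ⟨Equiv.arrowCongr π (Equiv.refl _), π, fun v i => rfl, hp⟩
  · rintro g e e' ⟨π, he, hg⟩ ⟨π', he', hg'⟩
    obtain rfl : π = π' := Equiv.ext fun l => ha ((hg l).symm.trans (hg' l))
    ext v i
    rw [he, he']
  · rintro g g' e ⟨π, he, hg⟩ ⟨π', he', hg'⟩
    obtain rfl : π = π' := by
      refine inv_injective (Equiv.ext fun i => ?_)
      by_contra hne
      have h1 := (he (Pi.single (π⁻¹ i) 1) i).symm.trans (he' _ i)
      rw [Pi.single_eq_same, Pi.single_eq_of_ne (Ne.symm hne)] at h1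
      exact one_ne_zero h1
    refine Subtype.ext (Equiv.ext fun x => ?_)
    rcases hcases x with rfl | ⟨l, rfl⟩
    · rw [hg0, hg0]
    · rw [hg, hg']
  · intro e
    rw [mem_aut0Set_dualSet_normFormCode h ha hrange]
    simp

end Kasami

section Enumeration

theorem pow_succ_injective_and_exists {K : Type*} [Field K] {x : K} {n : ℕ} (hn : 0 < n)
    (hx : orderOf x = n) :
    Function.Injective (fun j : Fin n => x ^ ((j : ℕ) + 1)) ∧
      ∀ w : K, w ^ n = 1 → ∃ j : Fin n, x ^ ((j : ℕ) + 1) = w := by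
  have hx1 : x ^ n = 1 := hx ▸ pow_orderOf_eq_one x
  have hx0 : x ≠ 0 := by
    rintro rfl
    rw [zero_pow hn.ne'] at hx1
    exact zero_ne_one hx1
  have : NeZero n := ⟨hn.ne'⟩
  refine ⟨fun i j hij => Fin.ext ?_, fun w hw => ?_⟩
  · simp only [pow_succ] at hij
    exact pow_injOn_Iio_orderOf (by simp [hx]) (by simp [hx]) (mul_right_cancel₀ hx0 hij)
  · obtain ⟨i, hi, rfl⟩ := (hx ▸ IsPrimitiveRoot.orderOf x).eq_pow_of_pow_eq_one hw
    rcases Nat.eq_zero_or_pos i with rfl | hi0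
    · refine ⟨⟨n - 1, by omega⟩, ?_⟩
      change x ^ (n - 1 + 1) = _
      rw [Nat.sub_add_cancel hn, hx1, pow_zero]
    · refine ⟨⟨i - 1, by omega⟩, ?_⟩
      change x ^ (i - 1 + 1) = _
      rw [Nat.sub_add_cancel hi0]

variable {F K : Type*} [Field F] [Field K] [Algebra F K] [Fintype F] [Fintype K]

theorem algebraMap_norm_eq_pow (h : Fintype.card K = Fintype.card F ^ 2) (x : K) :
    algebraMap F K (Algebra.norm F x) = x ^ (Fintype.card F + 1) := by
  rw [algebraMap_norm_quadratic h, FiniteField.coe_frobeniusAlgHom, pow_succ']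

theorem isNormOneFamily_pow_succ (h : Fintype.card K = Fintype.card F ^ 2) {ζ : K} {n : ℕ}
    (hn : n = Fintype.card F + 1) (hζ : orderOf ζ = n) :
    IsNormOneFamily F (fun j : Fin n => ζ ^ ((j : ℕ) + 1)) := by
  subst hn
  obtain ⟨hinj, hex⟩ := pow_succ_injective_and_exists (Nat.succ_pos _) hζ
  have hnorm : ∀ x : K, Algebra.norm F x = 1 ↔ x ^ (Fintype.card F + 1) = 1 := fun x => by
    rw [← algebraMap_norm_eq_pow h, map_eq_one_iff _ (algebraMap F K).injective]
  refine ⟨hinj, fun j => ?_, fun w hw => hex w ((hnorm w).mp hw)⟩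
  rw [hnorm, ← pow_mul, mul_comm, pow_mul, orderOf_dvd_iff_pow_eq_one.mp hζ.dvd, one_pow]

theorem range_pow_succ_eq_compl_zero {α : K} {n : ℕ} (hn : n = Fintype.card K - 1)
    (hα : orderOf α = n) : Set.range (fun l : Fin n => α ^ ((l : ℕ) + 1)) = {0}ᶜ := by
  have hn0 : 0 < n := by
    have := Fintype.one_lt_card (α := K)
    omega
  obtain ⟨-, hex⟩ := pow_succ_injective_and_exists hn0 hα
  have hα0 : α ≠ 0 := by
    rintro rfl
    rw [orderOf_zero] at hα
    omega
  refine Set.Subset.antisymm ?_ fun x hx => hex x (hn ▸ FiniteField.pow_card_sub_one_eq_one x hx)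
  rintro _ ⟨l, rfl⟩
  exact pow_ne_zero _ hα0

end Enumeration

theorem card_aut0Set_of_range_eq {F K X : Type*} [Field F] [Field K] [Fintype F] [Fintype K]
    [Algebra (ZMod 2) F] [Algebra F K] [CharP F 2] [Group X] {S : Set X} {m q : ℕ}
    (hq : q = 2 ^ m) (hF : Fintype.card F = q) (h : Fintype.card K = Fintype.card F ^ 2)
    {φ : semilinearGroup F K →* X} (hφ : Function.Injective φ) (hS : Set.range φ = S) :
    Nat.card S = m * (q ^ 2 - 1) * (q ^ 2 - q) := by
  rw [← hS, Nat.card_range_of_injective hφ, card_semilinearGroup (hF.trans hq) h, hF]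

/-- Let `m ≥ 1`, `q = 2^m`.  For each of the codes `M_q^⊥`, `M_q`, `K_q`,
`K_q^⊥`, every zero-fixing automorphism is semilinear, and the groups `Aut0(M_q^⊥)`,
`Aut0(M_q)`, `Aut0(K_q)`, `Aut0(K_q^⊥)` are pairwise isomorphic, each of order
`m·(q²−1)·(q²−q)` (the order of `ΓL(2,q)`).  Moreover `AutM(M_q^⊥)` and `AutM(M_q)` each
have order `(q²−1)·(q²−q)` (the order of `GL(2,q)`). -/
theorem stmt_13 (m q : ℕ) (hm : 1 ≤ m) (hq : q = 2 ^ m)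
    (F K : Type) [Field F] [Field K] [Fintype F] [Fintype K]
    [Algebra (ZMod 2) F] [Algebra (ZMod 2) K] [Algebra F K] [IsScalarTower (ZMod 2) F K]
    (hcF : Fintype.card F = q) (hcK : Fintype.card K = q ^ 2)
    (α : K) (hα : orderOf α = q ^ 2 - 1)
    (ζ : K) (hζ : ζ = α ^ (q - 1))
    (θ : F) (hθ : algebraMap F K θ = α ^ (q + 1))
    (Mdual : Set (Fin (q + 1) → F))
    (hM : Mdual = {w | ∃ (c : F) (δ : K), ∀ j : Fin (q + 1),
        w j = c + Algebra.trace F K (δ * ζ ^ ((j : ℕ) + 1))})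
    (Kdual : Set (Fin (q ^ 2 - 1) → ZMod 2))
    (hK : Kdual = {w | ∃ (c : F) (δ : K), ∀ l : Fin (q ^ 2 - 1),
        w l = Algebra.trace (ZMod 2) K (δ * α ^ ((l : ℕ) + 1))
            + Algebra.trace (ZMod 2) F (c * θ ^ ((l : ℕ) + 1))}) :
    (aut0Set Mdual = autSSet Mdual ∧
     aut0Set (dualSet Mdual) = autSSet (dualSet Mdual) ∧
     aut0Set Kdual = autSSet Kdual ∧
     aut0Set (dualSet Kdual) = autSSet (dualSet Kdual)) ∧
    (MulBijOn (aut0Set Mdual) (aut0Set (dualSet Mdual)) ∧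
     MulBijOn (aut0Set Mdual) (aut0Set Kdual) ∧
     MulBijOn (aut0Set Mdual) (aut0Set (dualSet Kdual)) ∧
     MulBijOn (aut0Set (dualSet Mdual)) (aut0Set Kdual) ∧
     MulBijOn (aut0Set (dualSet Mdual)) (aut0Set (dualSet Kdual)) ∧
     MulBijOn (aut0Set Kdual) (aut0Set (dualSet Kdual))) ∧
    (Nat.card (aut0Set Mdual) = m * (q ^ 2 - 1) * (q ^ 2 - q) ∧
     Nat.card (aut0Set (dualSet Mdual)) = m * (q ^ 2 - 1) * (q ^ 2 - q) ∧
     Nat.card (aut0Set Kdual) = m * (q ^ 2 - 1) * (q ^ 2 - q) ∧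
     Nat.card (aut0Set (dualSet Kdual)) = m * (q ^ 2 - 1) * (q ^ 2 - q)) ∧
    (Nat.card (autMSet Mdual) = (q ^ 2 - 1) * (q ^ 2 - q) ∧
     Nat.card (autMSet (dualSet Mdual)) = (q ^ 2 - 1) * (q ^ 2 - q)) := by
  have : CharP F 2 := charP_of_injective_algebraMap (algebraMap (ZMod 2) F).injective 2
  have h : Fintype.card K = Fintype.card F ^ 2 := by rw [hcK, hcF]
  have hq2 : 2 ≤ q := hq ▸ Nat.le_self_pow (by omega) 2
  have hι : Fintype.card F = 2 ∨ 5 ≤ Fintype.card (Fin (q + 1)) := by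
    rw [hcF, Fintype.card_fin]
    rcases hm.eq_or_lt with rfl | hm2
    · exact Or.inl hq
    · have : 2 ^ 2 ≤ q := hq ▸ Nat.pow_le_pow_right two_pos hm2
      omega
  have hqq : q ^ 2 - 1 = (q + 1) * (q - 1) := by
    simpa using Nat.sq_sub_sq q 1
  have hζo : orderOf ζ = q + 1 := by
    rw [hζ, orderOf_pow_of_dvd (by omega) (hα ▸ hqq ▸ Dvd.intro_left _ rfl), hα, hqq,
      Nat.mul_div_cancel _ (by omega)]
  have hz : IsNormOneFamily F (fun j : Fin (q + 1) => ζ ^ ((j : ℕ) + 1)) :=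
    isNormOneFamily_pow_succ h (by rw [hcF]) hζo
  have hq1 : q ^ 2 - 1 = Fintype.card K - 1 := by rw [hcK]
  have ha := (pow_succ_injective_and_exists (by rw [hqq]; exact Nat.mul_pos (by omega) (by omega)) hα).1
  have hrange := range_pow_succ_eq_compl_zero hq1 hα
  have hθ' : θ = Algebra.norm F α := (algebraMap F K).injective (by
    rw [hθ, algebraMap_norm_eq_pow h, hcF])
  have hM' : Mdual = evaluationCode F (fun j : Fin (q + 1) => ζ ^ ((j : ℕ) + 1)) := hM
  have hK' : Kdual = normFormCode F (fun l : Fin (q ^ 2 - 1) => α ^ ((l : ℕ) + 1)) := by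
    rw [hK, hθ']
    simp only [← map_pow]
    rfl
  have hMd : dualSet Mdual = relationCode F (fun j : Fin (q + 1) => ζ ^ ((j : ℕ) + 1)) := by
    rw [hM', dualSet_evaluationCode]
  have hM0 : aut0Set Mdual = autSSet Mdual := by
    rw [hM']
    exact hz.aut0Set_evaluationCode h hι
  have hMd0 : aut0Set (dualSet Mdual) = autSSet (dualSet Mdual) := by
    rw [hMd]
    exact hz.aut0Set_relationCode h hι
  obtain ⟨⟨φ₁, hφ₁, hr₁⟩, hm₁⟩ := exists_monoidHom_autSSet_evaluationCode hz h
  obtain ⟨⟨φ₂, hφ₂, hr₂⟩, hm₂⟩ := exists_monoidHom_autSSet_relationCode hz h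
  obtain ⟨φ₃, hφ₃, hr₃⟩ := exists_monoidHom_aut0Set_normFormCode (F := F) h ha hrange
  rw [← hM', ← hM0] at hr₁
  rw [← hMd, ← hMd0] at hr₂
  have hr₄ := hr₃
  rw [aut0Set_dualSet_zmod_two, ← hK'] at hr₃
  rw [← hK'] at hr₄
  rw [← hM', hcF] at hm₁
  rw [← hMd, hcF] at hm₂
  refine ⟨⟨hM0, hMd0, aut0Set_eq_autSSet_zmod_two _, aut0Set_eq_autSSet_zmod_two _⟩, ?_,
    ⟨card_aut0Set_of_range_eq hq hcF h hφ₁ hr₁, card_aut0Set_of_range_eq hq hcF h hφ₂ hr₂,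
      card_aut0Set_of_range_eq hq hcF h hφ₃ hr₃, card_aut0Set_of_range_eq hq hcF h hφ₃ hr₄⟩,
    hm₁, hm₂⟩
  refine ⟨?_, ?_, ?_, ?_, ?_, ?_⟩
  · exact hr₁ ▸ hr₂ ▸ mulBijOn_range hφ₁ hφ₂
  · exact hr₁ ▸ hr₃ ▸ mulBijOn_range hφ₁ hφ₃
  · exact hr₁ ▸ hr₄ ▸ mulBijOn_range hφ₁ hφ₃
  · exact hr₂ ▸ hr₃ ▸ mulBijOn_range hφ₂ hφ₃
  · exact hr₂ ▸ hr₄ ▸ mulBijOn_range hφ₂ hφ₃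
  · rw [hr₃.symm.trans hr₄]
    exact hr₄ ▸ mulBijOn_range hφ₃ hφ₃
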